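/- The elliptic fake degree of [λ×∅] in R̄(W(B_n)) equals (q-1)^n · q^{2n(λ)} · Π_{(i,j)∈λ} (1 - q^{2c(i,j)+1})/(1 - q^{2h(i,j)}). -/

import Mathlib

set_option maxHeartbeats 1000000
set_option synthInstance.maxHeartbeats 400000

/-!
STATEMENT 9: the elliptic fake degree of `[λ×∅] ∈ R̄(W(B_n))` equals
`(q-1)^n · q^{2n(λ)} · Π_{(i,j)∈λ} (1-q^{2c(i,j)+1})/(1-q^{2h(i,j)})`.
-/

open scoped BigOperators Classical

noncomputable section

/-- the multiset of fiber sizes of `f : Fin n → ℕ` (over the image of `f`). -/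
def fiberSizes (n : ℕ) (f : Fin n → ℕ) : Multiset ℕ :=
  (Finset.univ.image f).val.map (fun j => (Finset.univ.filter (fun i => f i = j)).card)

/-- the Young subgroup of `S_n` preserving the fibers of `f`. -/
def youngSubgroup (n : ℕ) (f : Fin n → ℕ) : Subgroup (Equiv.Perm (Fin n)) where
  carrier := {w | ∀ i, f (w i) = f i}
  one_mem' := by intro i; rfl
  mul_mem' := by
    intro a b ha hb i
    simpa [Equiv.Perm.mul_apply] using (ha (b i)).trans (hb i)
  inv_mem' := by
    intro a ha i
    simpa using (ha (a⁻¹ i)).symm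

/-- the function on `G` induced from `φ` on the subgroup `H`. -/
def indCF {G : Type} [Group G] [Fintype G] (H : Subgroup G) (φ : G → ℚ) : G → ℚ :=
  fun w => ((Nat.card H : ℚ))⁻¹ *
    ∑ g : G, if g⁻¹ * w * g ∈ H then φ (g⁻¹ * w * g) else 0

/-- the standard character pairing on `S_n` (characters here are real valued). -/
def pairS (n : ℕ) (a b : Equiv.Perm (Fin n) → ℚ) : ℚ :=
  ((n.factorial : ℚ))⁻¹ * ∑ w : Equiv.Perm (Fin n), a w * b w

/-- the multiset of parts of the conjugate (transposed) partition. -/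
def conjParts (n : ℕ) (m : Multiset ℕ) : Multiset ℕ :=
  ((Finset.range n).val.map (fun j => Multiset.card (m.filter (fun a => j < a)))).filter
    (fun a => 0 < a)

/-- `χ` is (the character of) the irreducible representation `σ_λ` of `S_n` attached to
the partition with parts `lam` and conjugate-partition parts `lamT`: it is a genuine
character, has norm one (so is irreducible), and is a common constituent of
`Ind_{S_λ} 1` and `Ind_{S_{λᵗ}} sgn` — which characterizes `σ_λ`. -/
def IsIrrCharOf (n : ℕ) (lam lamT : Multiset ℕ) (χ : Equiv.Perm (Fin n) → ℤ) : Prop :=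
  (∃ V : FDRep ℂ (Equiv.Perm (Fin n)), ∀ g, V.character g = (χ g : ℂ)) ∧
  pairS n (fun w => (χ w : ℚ)) (fun w => (χ w : ℚ)) = 1 ∧
  (∀ f : Fin n → ℕ, fiberSizes n f = lam →
      pairS n (fun w => (χ w : ℚ)) (indCF (youngSubgroup n f) (fun _ => 1)) ≠ 0) ∧
  (∀ f : Fin n → ℕ, fiberSizes n f = lamT →
      pairS n (fun w => (χ w : ℚ))
        (indCF (youngSubgroup n f) (fun w => ((Equiv.Perm.sign w : ℤ) : ℚ))) ≠ 0)

abbrev K : Type := RatFunc ℚ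

/-- an element of `W(B_n)`. -/
abbrev BElt (n : ℕ) := Equiv.Perm (Fin n) × (Fin n → Bool)

/-- the signed permutation matrix of `p ∈ W(B_n)`, over `K = ℚ(q)`. -/
def BMat (n : ℕ) (p : BElt n) : Matrix (Fin n) (Fin n) K :=
  Matrix.of fun i j => if p.1 j = i then (if p.2 j then -1 else 1) else 0

/-- the hook length `h(i,j)` of the box `c = (i,j)` of `μ` (0-indexed). -/
def hookLen (μ : YoungDiagram) (c : ℕ × ℕ) : ℕ :=
  μ.rowLen c.1 + μ.colLen c.2 - c.1 - c.2 - 1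

/-- the content `c(i,j) = j - i` of a box (0-indexed). -/
def content (c : ℕ × ℕ) : ℤ := (c.2 : ℤ) - (c.1 : ℤ)

/-- `n(λ) = Σ_i (i-1) λ_i = Σ_{(i,j)∈λ} i` (0-indexed rows). -/
def nInv (μ : YoungDiagram) : ℕ := ∑ c ∈ μ.cells, c.1


/-- fiber cardinalities -/
def typeOf {n : ℕ} {Z : Type} (F : Fin n → Z) (z : Z) : ℕ :=
  (Finset.univ.filter (fun x => F x = z)).card

theorem typeOf_comp {n : ℕ} {Z : Type} (F : Fin n → Z) (w : Equiv.Perm (Fin n)) :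
    typeOf (F ∘ w) = typeOf F := by
  funext z
  unfold typeOf
  apply Finset.card_bij (fun a _ => w a)
  · intro a ha; simpa using ha
  · intro a _ b _ h; simpa using h
  · intro b hb; exact ⟨w.symm b, by simpa using hb, by simp⟩

theorem exists_perm_of_typeOf_eq {n : ℕ} {Z : Type} (F G : Fin n → Z)
    (h : typeOf F = typeOf G) : ∃ w : Equiv.Perm (Fin n), F ∘ w = G := by
  have e : ∀ z, Nonempty ({x // G x = z} ≃ {x // F x = z}) := by
    intro z
    rw [← Fintype.card_eq]
    have := congrFun h z
    unfold typeOf at this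
    rw [Fintype.card_subtype, Fintype.card_subtype]
    exact this.symm
  have e : ∀ z, ({x // G x = z} ≃ {x // F x = z}) := fun z => Classical.choice (e z)
  refine ⟨(Equiv.sigmaFiberEquiv G).symm.trans
    ((Equiv.sigmaCongrRight fun z => e z).trans (Equiv.sigmaFiberEquiv F)), ?_⟩
  funext x
  simp [Equiv.sigmaFiberEquiv]
  exact (e (G x) ⟨x, rfl⟩).2

theorem exists_typeOf {n : ℕ} {Z : Type} [Fintype Z] (A : Z → ℕ) (hA : ∑ z, A z = n) :
    ∃ F : Fin n → Z, typeOf F = A := by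
  have : Nonempty (Fin n ≃ Σ z, Fin (A z)) := by
    rw [← Fintype.card_eq]; simp [hA]
  obtain ⟨e⟩ := this
  refine ⟨fun x => (e x).1, ?_⟩
  funext z
  unfold typeOf
  rw [← Fintype.card_subtype]
  have e2 : {x // (e x).1 = z} ≃ Fin (A z) :=
    (e.subtypeEquiv (q := fun y => y.1 = z) (fun a => Iff.rfl)).trans (Equiv.sigmaSubtype z)
  rw [Fintype.card_congr e2]; simp

theorem sum_typeOf {n : ℕ} {Z : Type} [Fintype Z] (F : Fin n → Z) : ∑ z, typeOf F z = n := by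
  unfold typeOf
  have := Finset.card_eq_sum_card_fiberwise (s := Finset.univ) (t := Finset.univ) (f := F) (by simp)
  rw [Finset.card_univ, Fintype.card_fin] at this
  refine Eq.trans ?_ this.symm
  refine Finset.sum_congr rfl fun z _ => ?_
  congr

/-- stabilizer counts over a type class, against a reference function -/
theorem sum_stab_eq {n : ℕ} {Z : Type} [Fintype Z] (F₀ : Fin n → Z) (R : Type) [CommRing R]
    (φ : (Fin n → Z) → R) :
    ∑ F ∈ Finset.univ.filter (fun F : Fin n → Z => typeOf F = typeOf F₀),
      ∑ w : Equiv.Perm (Fin n), (if F ∘ w = F then φ F else 0)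
    = ∑ w : Equiv.Perm (Fin n), φ (F₀ ∘ w) := by
  have h1 : ∀ F ∈ Finset.univ.filter (fun F : Fin n → Z => typeOf F = typeOf F₀),
      ∑ w : Equiv.Perm (Fin n), (if F ∘ w = F then φ F else 0)
       = ∑ w : Equiv.Perm (Fin n), (if F₀ ∘ w = F then φ F else 0) := by
    intro F hF
    obtain ⟨u, hu⟩ := exists_perm_of_typeOf_eq F₀ F (by simpa using (Finset.mem_filter.1 hF).2.symm)
    refine Fintype.sum_equiv (Equiv.mulLeft u) _ _ ?_
    intro w
    have : F₀ ∘ ⇑(Equiv.mulLeft u w) = F ∘ w := by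
      rw [← hu]; rfl
    rw [this]
  rw [Finset.sum_congr rfl h1, Finset.sum_comm]
  refine Finset.sum_congr rfl fun w _ => ?_
  rw [Finset.sum_eq_single (F₀ ∘ w)]
  · simp
  · intro b _ hb; rw [if_neg (Ne.symm hb)]
  · intro h; simp [typeOf_comp] at h

/-- `p_w(x)` -/
def pw {n N : ℕ} {R : Type} [CommRing R] (w : Equiv.Perm (Fin n)) (x : Fin N → R) : R :=
  ∑ g : Fin n → Fin N, if g ∘ w = g then ∏ i, x (g i) else 0

/-- permutation character of type `α` -/
def hc {n N : ℕ} (α : Fin N → ℤ) (w : Equiv.Perm (Fin n)) : ℤ :=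
  ((Finset.univ.filter (fun f : Fin n → Fin N =>
    (∀ j, (typeOf f j : ℤ) = α j) ∧ f ∘ w = f)).card : ℤ)

/-- complete homogeneous -/
def hz {N : ℕ} {R : Type} [CommRing R] (x : Fin N → R) (m : ℤ) : R :=
  if m < 0 then 0 else PowerSeries.coeff m.toNat (∏ i, PowerSeries.mk (fun k => x i ^ k))

theorem hz_nat {N : ℕ} {R : Type} [CommRing R] (x : Fin N → R) (m : ℕ) :
    hz x m = ∑ a ∈ Finset.piAntidiag Finset.univ m, ∏ j, x j ^ a j := by
  unfold hz
  rw [if_neg (by omega), Int.toNat_natCast, PowerSeries.coeff_prod]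
  simp only [PowerSeries.coeff_mk]
  refine Finset.sum_bij' (fun l _ => (l : Fin N → ℕ)) (fun a _ => Finsupp.equivFunOnFinite.symm a)
    ?_ ?_ ?_ ?_ ?_
  · intro a ha; simpa [Finset.mem_finsuppAntidiag] using ha
  · intro a ha
    simpa [Finset.mem_finsuppAntidiag] using ha
  · intro a _; ext; simp
  · intro a _; rfl
  · intro a _; rfl

theorem hc_mul_pw {n N : ℕ} {R : Type} [CommRing R] (x : Fin N → R) (α : Fin N → ℤ)
    (hα : ∑ i, α i = n) :
    ∑ w : Equiv.Perm (Fin n), ((hc α w : ℤ) : R) * pw w x = (n.factorial : R) * ∏ i, hz x (α i) := by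
  by_cases hneg : ∃ i, α i < 0
  · obtain ⟨i, hi⟩ := hneg
    rw [Finset.prod_eq_zero (Finset.mem_univ i) (by simp [hz, hi]), mul_zero]
    apply Finset.sum_eq_zero
    intro w _
    have : hc α w = 0 := by
      unfold hc
      rw [Finset.filter_false_of_mem]; · rfl
      intro f _ h
      have := h.1 i
      omega
    simp [this]
  push Not at hneg
  obtain ⟨a, rfl⟩ : ∃ a : Fin N → ℕ, α = fun i => (a i : ℤ) :=
    ⟨fun i => (α i).toNat, funext fun i => (Int.toNat_of_nonneg (hneg i)).symm⟩
  simp only [hz_nat]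
  rw [Finset.prod_univ_sum]
  have ha : ∑ i, a i = n := by
    have : ∑ i, (a i : ℤ) = n := hα
    exact_mod_cast this
  -- functions to pairs
  have key : ∀ A ∈ Fintype.piFinset (fun i => Finset.piAntidiag (Finset.univ : Finset (Fin N)) (a i)),
      ∑ F ∈ Finset.univ.filter (fun F : Fin n → Fin N × Fin N => typeOf F = fun p => A p.1 p.2),
        ∑ w : Equiv.Perm (Fin n), (if F ∘ w = F then ∏ i, x (F i).2 else 0)
      = (n.factorial : R) * ∏ i, ∏ j, x j ^ A i j := by
    intro A hA
    have hA' : ∀ i, ∑ j, A i j = a i := by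
      intro i
      have := Fintype.mem_piFinset.1 hA i
      simpa using (Finset.mem_piAntidiag.1 this).1
    obtain ⟨F₀, hF₀⟩ := exists_typeOf (n := n) (fun p : Fin N × Fin N => A p.1 p.2) (by
      rw [Fintype.sum_prod_type]; simp [hA', ha])
    have h2 : ∀ w : Equiv.Perm (Fin n), ∏ i, x ((F₀ ∘ w) i).2 = ∏ i, ∏ j, x j ^ A i j := by
      intro w
      have : ∏ i, x ((F₀ ∘ w) i).2 = ∏ i, x (F₀ i).2 :=
        Fintype.prod_equiv w _ _ (fun i => rfl)
      rw [this, ← Fintype.prod_prod_type' (fun i j => x j ^ A i j)]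
      rw [← Finset.prod_fiberwise_of_maps_to (s := Finset.univ) (t := Finset.univ) (g := F₀) (by simp)]
      refine Finset.prod_congr rfl fun p _ => ?_
      have : A p.1 p.2 = typeOf F₀ p := by rw [hF₀]
      rw [this, typeOf, Finset.prod_congr rfl (g := fun _ => x p.2), Finset.prod_const]
      · congr
      · intro i hi
        rw [(Finset.mem_filter.1 hi).2]
    have h3 := sum_stab_eq F₀ R (fun F => ∏ i, x (F i).2)
    rw [← hF₀]
    refine Eq.trans ?_ (h3.trans ?_)
    · congr!
    rw [Finset.sum_congr rfl (fun w _ => h2 w)]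
    simp [Fintype.card_perm]
  rw [Finset.mul_sum, ← Finset.sum_congr rfl key]
  -- LHS
  have hl : ∀ w : Equiv.Perm (Fin n), ((hc (fun i => (a i : ℤ)) w : ℤ) : R) * pw w x
      = ∑ F ∈ Finset.univ.filter (fun F : Fin n → Fin N × Fin N =>
          typeOf (fun i => (F i).1) = a), if F ∘ w = F then ∏ i, x (F i).2 else 0 := by
    intro w
    have e1 : ((hc (fun i => (a i : ℤ)) w : ℤ) : R) = ∑ f : Fin n → Fin N,
        if typeOf f = a ∧ f ∘ w = f then (1:R) else 0 := by
      rw [Finset.sum_boole]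
      unfold hc
      norm_cast
      congr 1
      congr 1
      ext f
      simp [funext_iff]
    rw [e1, pw, Finset.sum_mul_sum, Finset.sum_filter, ← Fintype.sum_prod_type']
    refine Fintype.sum_equiv (Equiv.arrowProdEquivProdArrow (Fin n) (fun _ => Fin N) (fun _ => Fin N)).symm _ _ ?_
    rintro ⟨f, g⟩
    have : ((Equiv.arrowProdEquivProdArrow (Fin n) (fun _ => Fin N) (fun _ => Fin N)).symm (f, g))
        = fun i => (f i, g i) := rfl
    rw [this]
    have h3 : ((fun i => (f i, g i)) ∘ w = fun i => (f i, g i)) ↔ (f ∘ w = f ∧ g ∘ w = g) := by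
      simp [funext_iff, forall_and]
    simp only [h3]
    by_cases c1 : typeOf f = a <;> by_cases c2 : f ∘ w = f <;> by_cases c3 : g ∘ w = g <;>
      simp [c1, c2, c3]
  rw [Finset.sum_congr rfl (fun w _ => hl w), Finset.sum_comm]
  rw [← Finset.sum_fiberwise_of_maps_to (g := fun F : Fin n → Fin N × Fin N =>
    fun i j => typeOf F (i, j))
    (t := Fintype.piFinset (fun i => Finset.piAntidiag (Finset.univ : Finset (Fin N)) (a i)))]
  · refine Finset.sum_congr rfl fun A hA => ?_
    refine Finset.sum_congr ?_ fun _ _ => rfl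
    ext F
    simp only [Finset.mem_filter, Finset.mem_univ, true_and]
    constructor
    · rintro ⟨h, rfl⟩; rfl
    · intro h
      refine ⟨?_, by rw [h]⟩
      funext i
      have hA' : ∑ j, A i j = a i := by
        have := Fintype.mem_piFinset.1 hA i
        simpa using (Finset.mem_piAntidiag.1 this).1
      rw [← hA']
      have : ∀ j, A i j = typeOf F (i, j) := by intro j; rw [h]
      simp only [this]
      unfold typeOf
      rw [Finset.card_eq_sum_card_fiberwise (t := Finset.univ) (f := fun x => (F x).2) (by simp)]
      refine Finset.sum_congr rfl fun j _ => ?_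
      rw [Finset.filter_filter]
      congr 1; ext x; simp [Prod.ext_iff]
  · intro F hF
    have hF := (Finset.mem_filter.1 hF).2
    rw [Fintype.mem_piFinset]
    intro i
    rw [Finset.mem_piAntidiag]
    refine ⟨?_, by simp⟩
    rw [← hF]
    unfold typeOf
    rw [Finset.card_eq_sum_card_fiberwise (t := Finset.univ) (f := fun x => (F x).2) (by simp)]
    refine Finset.sum_congr rfl fun j _ => ?_
    rw [Finset.filter_filter]
    congr 1; ext x; simp [Prod.ext_iff]

def Pk {N : ℕ} {R : Type} [CommRing R] (x : Fin N → R) (k : Fin N) : Polynomial R :=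
  ∏ i ∈ Finset.univ.erase k, (1 - Polynomial.C (x i) * Polynomial.X)

theorem Pk_coeff {N : ℕ} {R : Type} [CommRing R] (x : Fin N → R) (k : Fin N) (r : ℕ) (hr : N ≤ r) :
    (Pk x k).coeff r = 0 := by
  apply Polynomial.coeff_eq_zero_of_natDegree_lt
  refine lt_of_lt_of_le ?_ hr
  refine lt_of_le_of_lt (Polynomial.natDegree_prod_le _ _) ?_
  have : ∑ i ∈ Finset.univ.erase k, (1 - Polynomial.C (x i) * Polynomial.X : Polynomial R).natDegree
      ≤ ∑ i ∈ Finset.univ.erase k, 1 := by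
    apply Finset.sum_le_sum
    intro i _
    compute_degree
  refine lt_of_le_of_lt this ?_
  simp
  exact Nat.lt_of_lt_of_le k.pos le_rfl

theorem geom_mul {R : Type} [CommRing R] (a : R) :
    (PowerSeries.mk (fun k => a ^ k)) * ((1 - Polynomial.C a * Polynomial.X : Polynomial R) : PowerSeries R) = 1 := by
  push_cast
  ext m
  rw [mul_sub, mul_one, mul_comm (PowerSeries.C a), ← mul_assoc, map_sub,
    PowerSeries.coeff_mul_C]
  cases m with
  | zero => simp
  | succ m => rw [PowerSeries.coeff_succ_mul_X]; simp [PowerSeries.coeff_one, pow_succ]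

theorem H_mul_Pk {N : ℕ} {R : Type} [CommRing R] (x : Fin N → R) (k : Fin N) :
    (∏ i, PowerSeries.mk (fun m => x i ^ m)) * ((Pk x k : Polynomial R) : PowerSeries R)
      = PowerSeries.mk (fun m => x k ^ m) := by
  rw [← Finset.mul_prod_erase _ _ (Finset.mem_univ k), mul_assoc]
  have : ((Pk x k : Polynomial R) : PowerSeries R) =
     ∏ i ∈ Finset.univ.erase k, ((1 - Polynomial.C (x i) * Polynomial.X : Polynomial R) : PowerSeries R) := by
    unfold Pk
    have := map_prod (Polynomial.coeToPowerSeries.ringHom (R := R))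
      (fun i => (1 - Polynomial.C (x i) * Polynomial.X : Polynomial R)) (Finset.univ.erase k)
    simpa only [Polynomial.coeToPowerSeries.ringHom_apply] using this
  rw [this, ← Finset.prod_mul_distrib, Finset.prod_congr rfl (fun i _ => geom_mul (x i))]
  simp

theorem pow_eq_sum {N : ℕ} {R : Type} [CommRing R] (x : Fin N → R) (k : Fin N) (m : ℕ) :
    x k ^ m = ∑ j : Fin N, hz x ((m : ℤ) - (N - 1) + j) * (Pk x k).coeff (N - 1 - j) := by
  have h := congrArg (PowerSeries.coeff m) (H_mul_Pk x k)
  rw [PowerSeries.coeff_mk, PowerSeries.coeff_mul] at h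
  rw [← h, Finset.Nat.sum_antidiagonal_eq_sum_range_succ_mk]
  simp only [Polynomial.coeff_coe]
  have e1 : ∑ j : Fin N, hz x ((m : ℤ) - (N - 1) + j) * (Pk x k).coeff (N - 1 - j)
      = ∑ r ∈ Finset.range N, hz x ((m : ℤ) - r) * (Pk x k).coeff r := by
    rw [← Finset.sum_range_reflect, ← Fin.sum_univ_eq_sum_range
      (fun j => hz x ((m : ℤ) - ((N - 1 - j : ℕ) : ℤ)) * (Pk x k).coeff (N - 1 - j))]
    refine Finset.sum_congr rfl fun j _ => ?_
    congr 2
    have := j.2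
    omega
  rw [e1]
  have e2 : ∑ r ∈ Finset.range N, hz x ((m : ℤ) - r) * (Pk x k).coeff r
     = ∑ r ∈ Finset.range (max N (m+1)), hz x ((m : ℤ) - r) * (Pk x k).coeff r := by
    apply Finset.sum_subset
    · intro a; simp; omega
    · intro a _ h; rw [Pk_coeff x k a (by simpa using h), mul_zero]
  have e3 : ∑ r ∈ Finset.range (m+1), hz x ((m : ℤ) - r) * (Pk x k).coeff r
     = ∑ r ∈ Finset.range (max N (m+1)), hz x ((m : ℤ) - r) * (Pk x k).coeff r := by
    apply Finset.sum_subset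
    · intro a; simp; omega
    · intro a _ h
      rw [hz, if_pos, zero_mul]
      simp at h; omega
  rw [e2, ← e3, ← Finset.sum_range_reflect]
  refine Finset.sum_congr rfl fun r hr => ?_
  have hr := Finset.mem_range.1 hr
  rw [hz, if_neg (by omega)]
  congr 2 <;> congr 1 <;> omega

def altM {N : ℕ} {R : Type} [CommRing R] (x : Fin N → R) (lam : Fin N → ℕ) : Matrix (Fin N) (Fin N) R :=
  Matrix.of fun i k => x k ^ (lam i + (N - 1 - i))

def HM {N : ℕ} {R : Type} [CommRing R] (x : Fin N → R) (lam : Fin N → ℕ) : Matrix (Fin N) (Fin N) R :=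
  Matrix.of fun i j => hz x ((lam i : ℤ) - i + j)

theorem altM_eq {N : ℕ} {R : Type} [CommRing R] (x : Fin N → R) (lam : Fin N → ℕ) :
    altM x lam = HM x lam * Matrix.of (fun j k : Fin N => (Pk x k).coeff (N - 1 - j)) := by
  ext i k
  rw [Matrix.mul_apply]
  simp only [altM, HM, Matrix.of_apply]
  rw [pow_eq_sum]
  refine Finset.sum_congr rfl fun j _ => ?_
  congr 2
  have := i.2
  omega

theorem HM_zero_det {N : ℕ} {R : Type} [CommRing R] (x : Fin N → R) :
    (HM x (fun _ => 0)).det = 1 := by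
  rw [Matrix.det_of_isUpperTriangular]
  · apply Finset.prod_eq_one
    intro i _
    have := hz_nat x 0
    simp only [HM, Matrix.of_apply]
    simpa using this
  · intro i j hij
    simp only [HM, Matrix.of_apply, hz]
    have : (j : ℕ) < i := hij
    rw [if_pos]; push_cast; omega

theorem jacobi_trudi {N : ℕ} {R : Type} [CommRing R] (x : Fin N → R) (lam : Fin N → ℕ) :
    (HM x lam).det * (altM x (fun _ => 0)).det = (altM x lam).det := by
  rw [altM_eq x lam, altM_eq x (fun _ => 0), Matrix.det_mul, Matrix.det_mul, HM_zero_det, one_mul]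

/-- the candidate character -/
def chiL {n N : ℕ} (lam : Fin N → ℕ) (w : Equiv.Perm (Fin n)) : ℤ :=
  ∑ π : Equiv.Perm (Fin N), (Equiv.Perm.sign π : ℤ) * hc (fun i => (lam i : ℤ) - i + π i) w

theorem frob {n N : ℕ} {R : Type} [CommRing R] (x : Fin N → R) (lam : Fin N → ℕ)
    (hl : ∑ i, lam i = n) :
    (∑ w : Equiv.Perm (Fin n), ((chiL lam w : ℤ) : R) * pw w x) * (altM x (fun _ => 0)).det
      = (n.factorial : R) * (altM x lam).det := by
  rw [← jacobi_trudi x lam, ← mul_assoc]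
  congr 1
  rw [← Matrix.det_transpose, Matrix.det_apply']
  simp only [chiL]
  push_cast
  simp only [Finset.sum_mul]
  rw [Finset.sum_comm, Finset.mul_sum]
  refine Finset.sum_congr rfl fun π _ => ?_
  have := hc_mul_pw (n := n) x (fun i => (lam i : ℤ) - i + π i) (by
    rw [Finset.sum_add_distrib, Finset.sum_sub_distrib, Equiv.sum_comp π (fun i => ((i : ℕ) : ℤ))]
    rw [← hl]; push_cast; ring)
  simp only [mul_assoc]
  rw [← Finset.mul_sum, this]
  simp only [HM, Matrix.transpose_apply, Matrix.of_apply]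
  ring

theorem chiL_norm {n N : ℕ} (lam : Fin N → ℕ) (hanti : ∀ i j : Fin N, i ≤ j → lam j ≤ lam i)
    (hl : ∑ i, lam i = n) :
    ∑ w : Equiv.Perm (Fin n), chiL lam w * chiL lam w = (n.factorial : ℤ) := by
  let x : Fin N → MvPolynomial (Fin N) ℤ := MvPolynomial.X
  let d : Fin N →₀ ℕ := Finsupp.equivFunOnFinite.symm (fun i => lam i + (N - 1 - i))
  have h := congrArg (MvPolynomial.coeff d) (frob (n := n) x lam hl)
  have hmon : ∀ b : Fin N → ℕ, ∏ k, x k ^ b k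
      = MvPolynomial.monomial (Finsupp.equivFunOnFinite.symm b) (1:ℤ) := by
    intro b
    rw [MvPolynomial.monomial_eq]
    simp [x, Finsupp.prod_fintype]
  have hdet : ∀ l : Fin N → ℕ, (altM x l).det = ∑ π : Equiv.Perm (Fin N),
      MvPolynomial.monomial (Finsupp.equivFunOnFinite.symm
        (fun k => l (π k) + (N - 1 - (π k : ℕ)))) ((Equiv.Perm.sign π : ℤ)) := by
    intro l
    rw [Matrix.det_apply']
    refine Finset.sum_congr rfl fun π _ => ?_
    simp only [altM, Matrix.of_apply]
    rw [hmon (fun k => l (π k) + (N - 1 - (π k : ℕ)))]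
    rw [← mul_one ((Equiv.Perm.sign π : ℤ)), ← MvPolynomial.C_mul_monomial]
    simp
  have hp : ∀ w : Equiv.Perm (Fin n), MvPolynomial.coeff d (pw w x * (altM x (fun _ => 0)).det)
      = chiL lam w := by
    intro w
    rw [hdet, Finset.mul_sum, MvPolynomial.coeff_sum, chiL]
    refine Finset.sum_congr rfl fun π _ => ?_
    rw [MvPolynomial.coeff_mul_monomial']
    have hpw : pw w x = ∑ g : Fin n → Fin N, if g ∘ w = g then
        MvPolynomial.monomial (Finsupp.equivFunOnFinite.symm (typeOf g)) (1:ℤ) else 0 := by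
      unfold pw
      refine Finset.sum_congr rfl fun g _ => ?_
      congr 1
      rw [← hmon, ← Finset.prod_fiberwise_of_maps_to (s := Finset.univ) (t := Finset.univ) (g := g) (by simp)]
      refine Finset.prod_congr rfl fun p _ => ?_
      rw [typeOf, Finset.prod_congr rfl (g := fun _ => x p), Finset.prod_const]
      · congr
      · intro i hi
        rw [(Finset.mem_filter.1 hi).2]
    have hco : ∀ m : Fin N →₀ ℕ, MvPolynomial.coeff m (pw w x)
        = ((Finset.univ.filter (fun f : Fin n → Fin N => typeOf f = m ∧ f ∘ w = f)).card : ℤ) := by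
      intro m
      rw [hpw, MvPolynomial.coeff_sum, Finset.card_filter]
      push_cast
      refine Finset.sum_congr rfl fun g _ => ?_
      have : (Finsupp.equivFunOnFinite.symm (typeOf g) = m) ↔ typeOf g = m := by
        rw [Equiv.symm_apply_eq]; rfl
      by_cases c : g ∘ w = g <;> by_cases c' : typeOf g = m <;>
        simp [c, c', MvPolynomial.coeff_monomial, this]
    split_ifs with hle
    · rw [hco, mul_comm]
      congr 1
      unfold hc
      congr 2
      ext f
      simp only [Finset.mem_filter, Finset.mem_univ, true_and, funext_iff]
      refine and_congr_left fun _ => forall_congr' fun j => ?_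
      have h1 := hle j
      simp [d] at h1
      simp [d]
      have := j.2
      have := (π j).2
      omega
    · have : hc (fun i => (lam i : ℤ) - i + π i) w = 0 := by
        unfold hc
        rw [Finset.filter_false_of_mem]; · rfl
        rintro f _ ⟨h, -⟩
        apply hle
        intro j
        have h1 : (typeOf f j : ℤ) = (lam j : ℤ) - j + π j := h j
        simp [d]
        have := j.2
        have := (π j).2
        omega
      rw [this, mul_zero]
  rw [Finset.sum_mul, MvPolynomial.coeff_sum] at h
  have h' : ∀ w : Equiv.Perm (Fin n), MvPolynomial.coeff d
     (((chiL lam w : ℤ) : MvPolynomial (Fin N) ℤ) * pw w x * (altM x (fun _ => 0)).det)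
      = chiL lam w * chiL lam w := by
    intro w
    rw [mul_assoc, ← hp w]
    rw [← MvPolynomial.coeff_C_mul]
    simp
  rw [Finset.sum_congr rfl (fun w _ => h' w)] at h
  rw [h]
  have : ((n.factorial : ℕ) : MvPolynomial (Fin N) ℤ) = MvPolynomial.C (n.factorial : ℤ) := by simp
  rw [this, MvPolynomial.coeff_C_mul, hdet, MvPolynomial.coeff_sum]
  rw [Finset.sum_eq_single 1]
  · simp [d]
  · intro π _ hπ
    rw [MvPolynomial.coeff_monomial, if_neg]
    intro hd
    apply hπ
    ext k
    have := DFunLike.congr_fun hd k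
    simp [d] at this
    rcases lt_trichotomy (π k) k with hlt | heq | hgt
    · have := hanti _ _ hlt.le
      have := k.2
      have : (π k : ℕ) < k := hlt
      omega
    · simp [heq]
    · have := hanti _ _ hgt.le
      have := (π k).2
      have : (k : ℕ) < π k := hgt
      omega
  · simp

section rep
variable {n : ℕ} {V : Type} [AddCommGroup V] [Module ℂ V]
  (ρ : Representation ℂ (Equiv.Perm (Fin n)) V)

def eop {Z : Type} (f : Fin n → Z) : Module.End ℂ V :=
  ∑ w : Equiv.Perm (Fin n), if f ∘ w = f then ρ w else 0

def sop {Z : Type} (f : Fin n → Z) : Module.End ℂ V :=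
  ∑ w : Equiv.Perm (Fin n), if f ∘ w = f then ((Equiv.Perm.sign w : ℤ) : ℂ) • ρ w else 0

theorem comp_swap {Z : Type} (f : Fin n → Z) (i j : Fin n) (h : f i = f j) :
    f ∘ (Equiv.swap i j) = f := by
  funext x
  by_cases h1 : x = i
  · subst h1; simp [h]
  by_cases h2 : x = j
  · subst h2; simp [h]
  simp [Equiv.swap_apply_of_ne_of_ne h1 h2]

theorem eop_mul_sop {Z Z' : Type} (f : Fin n → Z) (g : Fin n → Z') (i j : Fin n) (hij : i ≠ j)
    (hf : f i = f j) (hg : g i = g j) : eop ρ f * sop ρ g = 0 := by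
  have hf' := comp_swap f i j hf
  have hg' := comp_swap g i j hg
  have h1 : eop ρ f * ρ (Equiv.swap i j) = eop ρ f := by
    unfold eop
    rw [Finset.sum_mul]
    refine Fintype.sum_equiv (Equiv.mulRight (Equiv.swap i j)) _ _ fun w => ?_
    have : (f ∘ ⇑(Equiv.mulRight (Equiv.swap i j) w) = f) ↔ f ∘ w = f := by
      have e : f ∘ ⇑(Equiv.mulRight (Equiv.swap i j) w) = (f ∘ w) ∘ (Equiv.swap i j) := rfl
      rw [e]
      constructor
      · intro h
        have := congrArg (fun k => k ∘ (Equiv.swap i j)) h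
        simp only [hf'] at this
        refine Eq.trans ?_ this; funext x; simp
      · intro h; rw [h, hf']
    rw [ite_mul, zero_mul]
    simp only [this]
    simp
  have h2 : ρ (Equiv.swap i j) * sop ρ g = - sop ρ g := by
    unfold sop
    rw [Finset.mul_sum, ← Finset.sum_neg_distrib]
    refine Fintype.sum_equiv (Equiv.mulLeft (Equiv.swap i j)) _ _ fun w => ?_
    have : g ∘ ⇑(Equiv.mulLeft (Equiv.swap i j) w) = g ∘ w := by
      have e : g ∘ ⇑(Equiv.mulLeft (Equiv.swap i j) w) = (g ∘ (Equiv.swap i j)) ∘ w := rfl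
      rw [e, hg']
    rw [mul_ite, mul_zero, this]
    split_ifs
    · simp [Equiv.Perm.sign_swap hij]
    · simp
  have h3 : eop ρ f * sop ρ g = - (eop ρ f * sop ρ g) := by
    calc eop ρ f * sop ρ g = (eop ρ f * ρ (Equiv.swap i j)) * sop ρ g := by rw [h1]
      _ = _ := by rw [mul_assoc, h2, mul_neg]
  have h4 : (2:ℂ) • (eop ρ f * sop ρ g) = 0 := by
    rw [two_smul]; nth_rewrite 1 [h3]; simp
  simpa using h4

theorem conj_sop {Z : Type} (g : Fin n → Z) (u : Equiv.Perm (Fin n)) :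
    ρ u * sop ρ g * ρ u⁻¹ = sop ρ (g ∘ ⇑u⁻¹) := by
  unfold sop
  rw [Finset.mul_sum, Finset.sum_mul]
  refine Fintype.sum_equiv (MulAut.conj u).toEquiv _ _ fun w => ?_
  have : ((g ∘ ⇑u⁻¹) ∘ ⇑((MulAut.conj u).toEquiv w) = g ∘ ⇑u⁻¹) ↔ g ∘ w = g := by
    have e : (g ∘ ⇑u⁻¹) ∘ ⇑((MulAut.conj u).toEquiv w) = (g ∘ w) ∘ ⇑u⁻¹ := by
      funext x; simp
    rw [e]
    exact (u⁻¹).surjective.injective_comp_right.eq_iff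
  simp only [this]
  split_ifs
  · have : Equiv.Perm.sign ((MulAut.conj u).toEquiv w) = Equiv.Perm.sign w := by
      simp only [MulEquiv.toEquiv_eq_coe, EquivLike.coe_coe, MulAut.conj_apply, map_mul, map_inv]
      rw [mul_comm, ← mul_assoc]; simp
    rw [this]
    simp
  · simp

variable [FiniteDimensional ℂ V]

theorem char_inv (u : Equiv.Perm (Fin n)) : ρ.character u⁻¹ = ρ.character u := by
  have : IsConj u⁻¹ u := by rw [Equiv.Perm.isConj_iff_cycleType_eq]; simp
  obtain ⟨c, hc⟩ := isConj_iff.1 this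
  exact (ρ.char_conj u⁻¹ c).symm.trans (by rw [hc])

theorem trace_eop_zero (hn : ∑ w : Equiv.Perm (Fin n), ρ.character w * ρ.character w = n.factorial)
    {Z Z' : Type} (f : Fin n → Z) (g : Fin n → Z')
    (hfg : ∀ u : Equiv.Perm (Fin n), eop ρ f * sop ρ (g ∘ u) = 0)
    (hg : LinearMap.trace ℂ V (sop ρ g) ≠ 0) : LinearMap.trace ℂ V (eop ρ f) = 0 := by
  have hcard : (Nat.card (Equiv.Perm (Fin n)) : ℂ) = n.factorial := by
    rw [Nat.card_eq_fintype_card, Fintype.card_perm, Fintype.card_fin]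
  have hne : (n.factorial : ℂ) ≠ 0 := by exact_mod_cast n.factorial_ne_zero
  have : Invertible (Nat.card (Equiv.Perm (Fin n)) : ℂ) := invertibleOfNonzero (by rwa [hcard])
  have h1 := Representation.card_inv_mul_sum_char_mul_char_eq_finrank ρ ρ
  simp only [char_inv, hn, hcard] at h1
  rw [inv_mul_cancel₀ hne] at h1
  have h1 : Module.finrank ℂ (Representation.IntertwiningMap ρ ρ) = 1 := by exact_mod_cast h1.symm
  let T : Module.End ℂ V := ∑ u : Equiv.Perm (Fin n), ρ u * sop ρ g * ρ u⁻¹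
  have hT : ∀ v : Equiv.Perm (Fin n), T * ρ v = ρ v * T := by
    intro v
    simp only [T]
    rw [Finset.mul_sum, Finset.sum_mul]
    symm
    refine Fintype.sum_equiv (Equiv.mulLeft v) _ _ fun u => ?_
    simp only [Equiv.coe_mulLeft, mul_inv_rev, map_mul, mul_assoc]
    rw [← map_mul ρ v⁻¹ v]; simp
  let T' : Representation.IntertwiningMap ρ ρ := ⟨T, fun v => by
    have := hT v
    exact this⟩
  let I : Representation.IntertwiningMap ρ ρ := ⟨LinearMap.id, fun v => by rfl⟩
  have hV : T ≠ 0 := by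
    intro h0
    have : LinearMap.trace ℂ V T = n.factorial * LinearMap.trace ℂ V (sop ρ g) := by
      simp only [T, map_sum]
      have : ∀ u : Equiv.Perm (Fin n), LinearMap.trace ℂ V (ρ u * sop ρ g * ρ u⁻¹)
          = LinearMap.trace ℂ V (sop ρ g) := by
        intro u
        rw [LinearMap.trace_mul_comm, ← mul_assoc, ← map_mul]; simp
      simp only [this]
      simp [Fintype.card_perm]
    rw [h0, map_zero] at this
    exact mul_ne_zero hne hg this.symm
  have hI : I ≠ 0 := by
    intro h0
    apply hV
    have : (LinearMap.id : V →ₗ[ℂ] V) = 0 := congrArg (fun k : Representation.IntertwiningMap ρ ρ => k.toLinearMap) h0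
    ext x
    have h := LinearMap.congr_fun this (T x)
    simpa using h
  obtain ⟨c, hc⟩ := (finrank_eq_one_iff_of_nonzero' I hI).1 h1 T'
  have hc' : T = c • (1 : Module.End ℂ V) := (congrArg (fun k : Representation.IntertwiningMap ρ ρ => k.toLinearMap) hc).symm
  have hc0 : c ≠ 0 := by
    rintro rfl; apply hV; rw [hc', zero_smul]
  have : eop ρ f * T = 0 := by
    simp only [T]
    rw [Finset.mul_sum]
    apply Finset.sum_eq_zero
    intro u _
    rw [conj_sop]; exact hfg u⁻¹
  rw [hc', mul_smul_comm, mul_one] at this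
  rw [(smul_eq_zero.1 this).resolve_left hc0, map_zero]

theorem trace_eop_nat (f : Fin n → ℕ) :
    ∃ m : ℕ, LinearMap.trace ℂ V (eop ρ f) = (Nat.card (youngSubgroup n f) : ℂ) * m := by
  have hne : (Nat.card (youngSubgroup n f) : ℂ) ≠ 0 := by
    exact_mod_cast Nat.card_pos.ne'
  have : Invertible (Nat.card (youngSubgroup n f) : ℂ) := invertibleOfNonzero hne
  let σ : Representation ℂ (youngSubgroup n f) V := ρ.comp (youngSubgroup n f).subtype
  have := Representation.card_inv_mul_sum_char_eq_finrank σ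
  refine ⟨Module.finrank ℂ σ.invariants, ?_⟩
  · rw [← this, mul_inv_cancel_left₀ hne]
    unfold eop
    rw [map_sum]
    refine Eq.trans ?_ (Finset.sum_subtype (p := fun w => w ∈ youngSubgroup n f)
      (Finset.univ.filter (fun w : Equiv.Perm (Fin n) => f ∘ w = f)) ?_ (fun w => ρ.character w))
    · rw [Finset.sum_filter]
      refine Finset.sum_congr rfl fun w _ => ?_
      split_ifs
      · rfl
      · simp
    · intro w
      simp only [Finset.mem_filter, Finset.mem_univ, true_and, funext_iff]
      rfl
end rep

theorem mem_young {n : ℕ} (f : Fin n → ℕ) (w : Equiv.Perm (Fin n)) :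
    w ∈ youngSubgroup n f ↔ f ∘ w = f := by
  rw [funext_iff]; rfl

theorem card_young {n : ℕ} (f : Fin n → ℕ) :
    Nat.card (youngSubgroup n f) = (Finset.univ.filter (fun w : Equiv.Perm (Fin n) => f ∘ w = f)).card := by
  rw [← Nat.subtype_card]
  intro w
  simp [mem_young]

theorem pairS_ind (n : ℕ) (ψ : Equiv.Perm (Fin n) → ℚ) (hψ : ∀ g w, ψ (g * w * g⁻¹) = ψ w)
    (f : Fin n → ℕ) (φ : Equiv.Perm (Fin n) → ℚ) :
    pairS n ψ (indCF (youngSubgroup n f) φ) =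
      (Nat.card (youngSubgroup n f) : ℚ)⁻¹ * ∑ w : Equiv.Perm (Fin n), if f ∘ w = f then φ w * ψ w else 0 := by
  unfold pairS indCF
  have : ∑ w : Equiv.Perm (Fin n), ψ w * ((Nat.card (youngSubgroup n f) : ℚ)⁻¹ *
      ∑ g : Equiv.Perm (Fin n), if g⁻¹ * w * g ∈ youngSubgroup n f then φ (g⁻¹ * w * g) else 0)
     = (Nat.card (youngSubgroup n f) : ℚ)⁻¹ * ∑ g : Equiv.Perm (Fin n), ∑ w : Equiv.Perm (Fin n),
       if f ∘ w = f then φ w * ψ w else 0 := by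
    rw [Finset.mul_sum]
    simp only [Finset.mul_sum]
    rw [Finset.sum_comm]
    refine Finset.sum_congr rfl fun g _ => ?_
    refine Fintype.sum_equiv (MulAut.conj g⁻¹).toEquiv _ _ fun w => ?_
    have e : (MulAut.conj g⁻¹).toEquiv w = g⁻¹ * w * g := by simp
    rw [e]
    have e2 : ψ (g⁻¹ * w * g) = ψ w := by
      have := hψ g⁻¹ w
      simpa using this
    simp only [mem_young, e2]
    split_ifs <;> ring
  rw [this]
  simp only [Finset.sum_const, Finset.card_univ, Fintype.card_perm, Fintype.card_fin, nsmul_eq_mul]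
  have hne : (n.factorial : ℚ) ≠ 0 := by exact_mod_cast n.factorial_ne_zero
  field_simp

theorem perm_eq_one {N : ℕ} (π : Equiv.Perm (Fin N))
    (h : ∀ r ≤ N, ∑ i ∈ Finset.univ.filter (fun i : Fin N => (i : ℕ) < r), ((π i : ℕ) : ℤ)
      ≤ ∑ i ∈ Finset.univ.filter (fun i : Fin N => (i : ℕ) < r), ((i : ℕ) : ℤ)) : π = 1 := by
  have key : ∀ k : ℕ, ∀ hk : k < N, π ⟨k, hk⟩ = ⟨k, hk⟩ := by
    intro k
    induction k using Nat.strong_induction_on with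
    | _ k ih =>
      intro hk
      have h1 := h (k + 1) hk
      have e : Finset.univ.filter (fun i : Fin N => (i : ℕ) < k + 1)
          = insert ⟨k, hk⟩ (Finset.univ.filter (fun i : Fin N => (i : ℕ) < k)) := by
        ext i; simp [Fin.ext_iff]; omega
      rw [e, Finset.sum_insert (by simp), Finset.sum_insert (by simp)] at h1
      have e2 : ∑ i ∈ Finset.univ.filter (fun i : Fin N => (i : ℕ) < k), ((π i : ℕ) : ℤ)
        = ∑ i ∈ Finset.univ.filter (fun i : Fin N => (i : ℕ) < k), ((i : ℕ) : ℤ) := by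
        refine Finset.sum_congr rfl fun i hi => ?_
        have hi := (Finset.mem_filter.1 hi).2
        rw [ih i hi i.2]
      rw [e2] at h1
      have h2 : ((π ⟨k, hk⟩ : Fin N) : ℕ) ≤ k := by
        have : (((π ⟨k, hk⟩ : Fin N) : ℕ) : ℤ) ≤ k := by simpa using h1
        exact_mod_cast this
      rcases h2.lt_or_eq with h3 | h3
      · have h4 := ih _ h3 (π ⟨k, hk⟩).2
        have := π.injective h4
        rw [Fin.ext_iff] at this
        simp at this
        omega
      · exact Fin.ext h3
  ext i
  simp [key i i.2]

theorem comb_perm {n N : ℕ} (μ : YoungDiagram) (f : Fin n → Fin N) (g : Fin n → ℕ)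
    (π : Equiv.Perm (Fin N)) (hf : ∀ i, (typeOf f i : ℤ) = (μ.rowLen i : ℤ) - i + π i)
    (hg : ∀ j, typeOf g j = μ.colLen j)
    (hinj : ∀ a b, f a = f b → g a = g b → a = b) : π = 1 := by
  apply perm_eq_one
  intro r hr
  have hB : ∀ x ∈ Finset.univ.filter (fun x : Fin n => (f x : ℕ) < r), g x ∈ Finset.range (μ.rowLen 0) := by
    intro x _
    rw [Finset.mem_range, ← YoungDiagram.mem_iff_lt_rowLen, YoungDiagram.mem_iff_lt_colLen, ← hg]
    unfold typeOf
    rw [Finset.card_pos]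
    exact ⟨x, by simp⟩
  have h1 : (Finset.univ.filter (fun x : Fin n => (f x : ℕ) < r)).card
      ≤ ∑ j ∈ Finset.range (μ.rowLen 0), min r (μ.colLen j) := by
    rw [Finset.card_eq_sum_card_fiberwise hB]
    refine Finset.sum_le_sum fun j _ => ?_
    rw [Finset.filter_filter, le_min_iff]
    constructor
    · rw [← Finset.card_range r]
      apply Finset.card_le_card_of_injOn (fun x => (f x : ℕ))
      · intro x hx; simp at hx; simp [hx.1]
      · intro a ha b hb hab
        simp at ha hb
        exact hinj a b (Fin.ext hab) (by rw [ha.2, hb.2])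
    · rw [← hg]
      unfold typeOf
      apply Finset.card_le_card
      intro x hx
      simp at hx; simp [hx.2]
  have h2 : ∑ j ∈ Finset.range (μ.rowLen 0), min r (μ.colLen j)
      = ∑ i ∈ Finset.range r, μ.rowLen i := by
    have a1 : ∀ j ∈ Finset.range (μ.rowLen 0), min r (μ.colLen j)
        = ∑ i ∈ Finset.range r, if (i, j) ∈ μ then 1 else 0 := by
      intro j _
      rw [← Finset.card_filter]
      have : Finset.filter (fun i => (i, j) ∈ μ) (Finset.range r) = Finset.range (min r (μ.colLen j)) := by
        ext i; simp [YoungDiagram.mem_iff_lt_colLen]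
      rw [this, Finset.card_range]
    have a2 : ∀ i ∈ Finset.range r, μ.rowLen i
        = ∑ j ∈ Finset.range (μ.rowLen 0), if (i, j) ∈ μ then 1 else 0 := by
      intro i _
      rw [← Finset.card_filter]
      have : Finset.filter (fun j => (i, j) ∈ μ) (Finset.range (μ.rowLen 0)) = Finset.range (μ.rowLen i) := by
        ext j; simp [YoungDiagram.mem_iff_lt_rowLen]
        intro h
        exact lt_of_lt_of_le h (μ.rowLen_anti 0 i (Nat.zero_le _))
      rw [this, Finset.card_range]
    rw [Finset.sum_congr rfl a1, Finset.sum_congr rfl a2, Finset.sum_comm]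
  have h3 : (Finset.univ.filter (fun x : Fin n => (f x : ℕ) < r)).card
      = ∑ i ∈ Finset.univ.filter (fun i : Fin N => (i : ℕ) < r), typeOf f i := by
    rw [Finset.card_eq_sum_card_fiberwise (f := f) (t := Finset.univ.filter (fun i : Fin N => (i : ℕ) < r))]
    · refine Finset.sum_congr rfl fun i hi => ?_
      have hi := (Finset.mem_filter.1 hi).2
      rw [Finset.filter_filter]
      unfold typeOf
      congr 1; ext x
      simp only [Finset.mem_filter, Finset.mem_univ, true_and, and_iff_right_iff_imp]
      rintro rfl; exact hi
    · intro x hx; simpa using hx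
  have h4 : ∑ i ∈ Finset.range r, μ.rowLen i
      = ∑ i ∈ Finset.univ.filter (fun i : Fin N => (i : ℕ) < r), μ.rowLen i := by
    symm
    apply Finset.sum_bij (fun (i : Fin N) _ => (i : ℕ))
    · intro a ha; simpa using ha
    · intro a _ b _ h; exact Fin.ext h
    · intro b hb
      have : b < r := by simpa using hb
      exact ⟨⟨b, by omega⟩, by simpa using this, rfl⟩
    · intro a _; rfl
  rw [h2, h4, h3] at h1
  have h5 : ∑ i ∈ Finset.univ.filter (fun i : Fin N => (i : ℕ) < r), (typeOf f i : ℤ)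
     ≤ ∑ i ∈ Finset.univ.filter (fun i : Fin N => (i : ℕ) < r), (μ.rowLen i : ℤ) := by exact_mod_cast h1
  simp only [hf, Finset.sum_add_distrib, Finset.sum_sub_distrib] at h5
  linarith

theorem fiberSizes_eq {n : ℕ} (ν : YoungDiagram) (f : Fin n → ℕ) (hf : ∀ j, typeOf f j = ν.rowLen j) :
    fiberSizes n f = (↑ν.rowLens : Multiset ℕ) := by
  unfold fiberSizes
  have h1 : Finset.univ.image f = Finset.range (ν.colLen 0) := by
    ext j
    rw [Finset.mem_range, ← YoungDiagram.mem_iff_lt_colLen, YoungDiagram.mem_iff_lt_rowLen, ← hf]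
    unfold typeOf
    rw [Finset.card_pos]
    simp [Finset.Nonempty]
  rw [h1]
  have : ∀ j, (Finset.univ.filter (fun i => f i = j)).card = ν.rowLen j := by
    intro j; rw [← hf]; unfold typeOf; congr
  simp only [YoungDiagram.rowLens]
  rw [← Multiset.map_coe]
  simp only [Finset.range, Multiset.range]
  refine Multiset.map_congr rfl fun j _ => ?_
  rw [← hf]; unfold typeOf; congr

theorem card_row (μ : YoungDiagram) (i : ℕ) :
    (μ.cells.filter (fun c => c.1 = i)).card = μ.rowLen i := by
  rw [YoungDiagram.rowLen_eq_card]; rfl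

theorem card_col (μ : YoungDiagram) (i : ℕ) :
    (μ.cells.filter (fun c => c.2 = i)).card = μ.colLen i := by
  rw [YoungDiagram.colLen_eq_card]; rfl

theorem chi_eq (n : ℕ) (μ : YoungDiagram) (hcard : μ.card = n)
    (χ : Equiv.Perm (Fin n) → ℤ)
    (hχ : IsIrrCharOf n (↑μ.rowLens : Multiset ℕ) (↑μ.transpose.rowLens : Multiset ℕ) χ)
    (N : ℕ) (hN : n ≤ N) (hl : ∑ i : Fin N, μ.rowLen i = n) (w : Equiv.Perm (Fin n)) :
    χ w = chiL (fun i : Fin N => μ.rowLen i) w := by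
  obtain ⟨⟨V, hV⟩, hnorm, hrow, hcol⟩ := hχ
  let ρ := V.ρ
  have hch : ∀ g, LinearMap.trace ℂ V (V.ρ g) = (χ g : ℂ) := hV
  have hne : (n.factorial : ℚ) ≠ 0 := by exact_mod_cast n.factorial_ne_zero
  have hnorm' : ∑ w : Equiv.Perm (Fin n), χ w * χ w = (n.factorial : ℤ) := by
    unfold pairS at hnorm
    rw [inv_mul_eq_iff_eq_mul₀ hne, mul_one] at hnorm
    have hnorm : ∑ w : Equiv.Perm (Fin n), (χ w : ℚ) * (χ w : ℚ) = n.factorial := hnorm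
    exact_mod_cast hnorm
  have hcls : ∀ g w, χ (g * w * g⁻¹) = χ w := by
    intro g w
    have := V.char_conj w g
    rw [hV, hV] at this
    exact_mod_cast this
  have htrE : ∀ {Z : Type} (f : Fin n → Z), LinearMap.trace ℂ V (eop V.ρ f)
      = ((∑ w : Equiv.Perm (Fin n), if f ∘ w = f then χ w else 0 : ℤ) : ℂ) := by
    intro Z f
    unfold eop
    rw [map_sum]
    push_cast
    refine Finset.sum_congr rfl fun w _ => ?_
    split_ifs
    · exact hch w
    · simp
  have htrS : ∀ {Z : Type} (f : Fin n → Z), LinearMap.trace ℂ V (sop V.ρ f)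
      = ((∑ w : Equiv.Perm (Fin n), if f ∘ w = f then (Equiv.Perm.sign w : ℤ) * χ w else 0 : ℤ) : ℂ) := by
    intro Z f
    unfold sop
    rw [map_sum]
    push_cast
    refine Finset.sum_congr rfl fun w _ => ?_
    split_ifs
    · rw [map_smul, hch w]; rfl
    · simp
  -- column function
  obtain ⟨e⟩ : Nonempty (Fin n ≃ μ.cells) := by
    rw [← Fintype.card_eq]; simp; exact hcard.symm
  let g₀ : Fin n → ℕ := fun x => (e x).1.2
  have hg₀ : ∀ j, typeOf g₀ j = μ.colLen j := by
    intro j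
    rw [← card_col]
    unfold typeOf
    apply Finset.card_bij (fun x _ => (e x).1)
    · intro x hx; simpa [g₀] using hx
    · intro a _ b _ h; exact e.injective (Subtype.ext h)
    · intro c hc
      obtain ⟨hc1, hc2⟩ := Finset.mem_filter.1 hc
      exact ⟨e.symm ⟨c, hc1⟩, by simp [g₀, hc2], by simp⟩
  have hS : LinearMap.trace ℂ V (sop V.ρ g₀) ≠ 0 := by
    have h1 := hcol g₀ (fiberSizes_eq _ _ (by
      intro j; rw [hg₀, YoungDiagram.rowLen_transpose]))
    rw [pairS_ind _ _ (by intro g w; exact_mod_cast hcls g w)] at h1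
    have h2 := right_ne_zero_of_mul h1
    rw [htrS]
    intro h3
    apply h2
    exact_mod_cast h3
  have hnorm2 : ∑ w : Equiv.Perm (Fin n), Representation.character V.ρ w * Representation.character V.ρ w = n.factorial := by
    have : ∀ w, Representation.character V.ρ w = (χ w : ℂ) := hV
    simp only [this]
    exact_mod_cast hnorm'
  -- sums against hc
  have hsum : ∀ α : Fin N → ℤ, ∑ w : Equiv.Perm (Fin n), χ w * hc α w
      = ∑ f ∈ Finset.univ.filter (fun f : Fin n → Fin N => ∀ j, (typeOf f j : ℤ) = α j),
         ∑ w : Equiv.Perm (Fin n), if f ∘ w = f then χ w else 0 := by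
    intro α
    rw [Finset.sum_comm]
    refine Finset.sum_congr rfl fun w _ => ?_
    rw [← Finset.sum_filter, Finset.filter_filter, Finset.sum_const, nsmul_eq_mul, mul_comm]
    rfl
  have hvan : ∀ π : Equiv.Perm (Fin N), π ≠ 1 →
      ∑ w : Equiv.Perm (Fin n), χ w * hc (fun i : Fin N => (μ.rowLen i : ℤ) - i + π i) w = 0 := by
    intro π hπ
    rw [hsum]
    apply Finset.sum_eq_zero
    intro f hf
    have hf := (Finset.mem_filter.1 hf).2
    have := trace_eop_zero V.ρ hnorm2 f g₀ (by
      intro u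
      by_contra hcon
      apply hπ
      apply comb_perm μ f (g₀ ∘ u) π hf (by intro j; rw [typeOf_comp]; exact hg₀ j)
      intro a b h1 h2
      by_contra hab
      exact hcon (eop_mul_sop V.ρ f (g₀ ∘ u) a b hab h1 h2)) hS
    rw [htrE] at this
    exact_mod_cast this
  have hge : (n.factorial : ℤ) ≤
      ∑ w : Equiv.Perm (Fin n), χ w * hc (fun i : Fin N => (μ.rowLen i : ℤ)) w := by
    rw [hsum]
    obtain ⟨F₀, hF₀⟩ := exists_typeOf (n := n) (fun i : Fin N => μ.rowLen i) hl
    have h1 := sum_stab_eq F₀ ℤ (fun _ => 1)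
    have h2 : ∑ w : Equiv.Perm (Fin n), (1:ℤ) = n.factorial := by simp [Fintype.card_perm]
    rw [← h2, ← h1]
    have h3 : Finset.univ.filter (fun f : Fin n → Fin N => ∀ j, (typeOf f j : ℤ) = (μ.rowLen j : ℤ))
      = Finset.univ.filter (fun F : Fin n → Fin N => typeOf F = typeOf F₀) := by
      ext f; simp [hF₀, funext_iff]
    rw [h3]
    refine Finset.sum_le_sum fun f hf => ?_
    have hf : typeOf f = fun i : Fin N => μ.rowLen i := by rw [← hF₀]; exact (Finset.mem_filter.1 hf).2
    let f' : Fin n → ℕ := fun x => f x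
    have hff : ∀ w : Equiv.Perm (Fin n), f ∘ w = f ↔ f' ∘ w = f' := by
      intro w; simp [f', funext_iff, Fin.ext_iff]
    have hf' : ∀ j, typeOf f' j = μ.rowLen j := by
      intro j
      by_cases hj : j < N
      · have := congrFun hf ⟨j, hj⟩
        rw [← this]
        unfold typeOf
        congr 1; ext x; simp [f', Fin.ext_iff]
      · have h0 : μ.rowLen j = 0 := by
          by_contra h0
          have : (j, 0) ∈ μ := by rw [YoungDiagram.mem_iff_lt_rowLen]; omega
          rw [YoungDiagram.mem_iff_lt_colLen] at this
          have h5 : μ.colLen 0 ≤ μ.card := by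
            rw [← card_col]; exact Finset.card_filter_le _ _
          omega
        rw [h0]
        unfold typeOf
        rw [Finset.card_eq_zero, Finset.eq_empty_iff_forall_notMem]
        intro x hx
        have hx : f' x = j := by simpa using hx
        have := (f x).2
        simp only [f'] at hx
        omega
    have h4 := hrow f' (fiberSizes_eq _ _ hf')
    rw [pairS_ind _ _ (by intro g w; exact_mod_cast hcls g w)] at h4
    have h5 := right_ne_zero_of_mul h4
    obtain ⟨m, hm⟩ := trace_eop_nat V.ρ f'
    rw [htrE, card_young] at hm
    simp only [hff]
    have hm' : (∑ w : Equiv.Perm (Fin n), if f' ∘ w = f' then χ w else 0 : ℤ)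
      = (((Finset.univ.filter (fun w : Equiv.Perm (Fin n) => f' ∘ w = f')).card * m : ℕ) : ℤ) := by
      exact_mod_cast hm
    have h6 : (∑ w : Equiv.Perm (Fin n), if f' ∘ w = f' then χ w else 0 : ℤ) ≠ 0 := by
      intro h; apply h5; simp only [one_mul]; exact_mod_cast h
    rw [hm'] at h6 ⊢
    have hm0 : 1 ≤ m := by
      rcases Nat.eq_zero_or_pos m with h | h
      · subst h; simp at h6
      · exact h
    rw [Finset.sum_boole]
    exact_mod_cast Nat.le_mul_of_pos_right _ hm0
  have hcross : (n.factorial : ℤ) ≤ ∑ w : Equiv.Perm (Fin n), χ w * chiL (fun i : Fin N => μ.rowLen i) w := by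
    refine hge.trans (le_of_eq ?_)
    simp only [chiL, Finset.mul_sum]
    symm
    rw [Finset.sum_comm, Finset.sum_eq_single 1]
    · simp
    · intro π _ hπ
      have := hvan π hπ
      rw [← mul_zero ((Equiv.Perm.sign π : ℤ)), ← this, Finset.mul_sum]
      refine Finset.sum_congr rfl fun w _ => ?_
      ring
    · simp
  have hLn := chiL_norm (n := n) (fun i : Fin N => μ.rowLen i)
    (fun i j hij => μ.rowLen_anti i j hij) hl
  have hzero : ∑ w : Equiv.Perm (Fin n), (χ w - chiL (fun i : Fin N => μ.rowLen i) w) ^ 2 = 0 := by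
    apply le_antisymm
    · have : ∀ w : Equiv.Perm (Fin n), (χ w - chiL (fun i : Fin N => μ.rowLen i) w) ^ 2
        = χ w * χ w - 2 * (χ w * chiL (fun i : Fin N => μ.rowLen i) w)
          + chiL (fun i : Fin N => μ.rowLen i) w * chiL (fun i : Fin N => μ.rowLen i) w := by
        intro w; ring
      simp only [this, Finset.sum_add_distrib, Finset.sum_sub_distrib, ← Finset.mul_sum]
      rw [hnorm', hLn]; linarith
    · exact Finset.sum_nonneg fun w _ => sq_nonneg _
  have := (Finset.sum_eq_zero_iff_of_nonneg (fun w _ => sq_nonneg _)).1 hzero w (Finset.mem_univ w)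
  have := pow_eq_zero_iff (two_ne_zero) |>.1 this
  linarith

theorem det_cycle {S : Type} [Fintype S] [DecidableEq S] [Nonempty S] {R : Type} [CommRing R]
    (σ : Equiv.Perm S) (hσ : ∀ x y, σ.SameCycle x y) (u : S → R) :
    (Matrix.of fun i j => (if i = j then (1:R) else 0) - (if σ j = i then u j else 0)).det
      = 1 - ∏ j, u j := by
  by_cases hfix : ∃ x, σ x = x
  · obtain ⟨x, hx⟩ := hfix
    have : Unique S := ⟨⟨x⟩, fun y => by
      obtain ⟨i, hi⟩ := hσ x y
      rw [Equiv.Perm.zpow_apply_eq_self_of_apply_eq_self hx] at hi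
      exact hi.symm⟩
    rw [Matrix.det_unique]
    simp [Subsingleton.elim (σ default) default]
  push Not at hfix
  have hsupp : σ.support = Finset.univ := by
    ext x; simp [hfix x]
  have hcyc : σ.IsCycle := by
    obtain ⟨x⟩ := ‹Nonempty S›
    exact ⟨x, hfix x, fun y _ => hσ x y⟩
  rw [Matrix.det_apply']
  have hne : σ ≠ 1 := hcyc.ne_one
  have h0 : ∀ τ : Equiv.Perm S, τ ≠ 1 → τ ≠ σ →
      ∏ j, (Matrix.of fun i j => (if i = j then (1:R) else 0) - (if σ j = i then u j else 0)) (τ j) j = 0 := by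
    intro τ h1 h2
    by_contra hp
    have hall : ∀ j, τ j = j ∨ τ j = σ j := by
      intro j
      by_contra hj
      push Not at hj
      apply hp
      apply Finset.prod_eq_zero (Finset.mem_univ j)
      simp [hj.1, hj.2.symm]
    have hstep : ∀ j, τ j = σ j → τ (σ j) = σ (σ j) := by
      intro j hj
      rcases hall (σ j) with h | h
      · exfalso
        rw [← hj] at h
        have := τ.injective h
        rw [hj] at this
        exact hfix j this
      · exact h
    obtain ⟨j, hj⟩ : ∃ j, τ j ≠ j := by
      by_contra h
      push Not at h
      exact h1 (Equiv.ext h)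
    have hj' := (hall j).resolve_left hj
    apply h2
    ext y
    obtain ⟨m, -, hm⟩ := (hσ j y).exists_pow_eq' 
    have : ∀ m : ℕ, τ ((σ ^ m) j) = σ ((σ ^ m) j) := by
      intro m
      induction m with
      | zero => simpa using hj'
      | succ m ih => rw [pow_succ', Equiv.Perm.mul_apply]; exact hstep _ ih
    rw [← hm]; exact this m
  rw [Finset.sum_eq_add_of_mem 1 σ (Finset.mem_univ _) (Finset.mem_univ _) hne.symm]
  · have e1 : ∏ j, (Matrix.of fun i j => (if i = j then (1:R) else 0) - (if σ j = i then u j else 0)) ((1 : Equiv.Perm S) j) j = 1 := by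
      apply Finset.prod_eq_one
      intro j _
      simp [hfix j]
    have e2 : ∏ j, (Matrix.of fun i j => (if i = j then (1:R) else 0) - (if σ j = i then u j else 0)) (σ j) j = ∏ j, (-1) * u j := by
      refine Finset.prod_congr rfl fun j _ => ?_
      simp [hfix j]
    rw [e1, e2, Finset.prod_mul_distrib, hcyc.sign, hsupp]
    simp
    rw [← mul_assoc, ← mul_pow]; simp; ring
  · intro τ _ h
    rw [h0 τ h.1 h.2, mul_zero]

def Orb {n : ℕ} (w : Equiv.Perm (Fin n)) : Type := Quotient (Equiv.Perm.SameCycle.setoid w)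

instance orbFintype {n : ℕ} (w : Equiv.Perm (Fin n)) : Fintype (Orb w) :=
  inferInstanceAs (Fintype (Quotient (Equiv.Perm.SameCycle.setoid w)))

def omk {n : ℕ} (w : Equiv.Perm (Fin n)) (x : Fin n) : Orb w := Quotient.mk (Equiv.Perm.SameCycle.setoid w) x

def osz {n : ℕ} (w : Equiv.Perm (Fin n)) (o : Orb w) : ℕ :=
  (Finset.univ.filter (fun x => omk w x = o)).card

theorem omk_eq {n : ℕ} (w : Equiv.Perm (Fin n)) (x y : Fin n) : omk w x = omk w y ↔ w.SameCycle x y := by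
  unfold omk; exact Quotient.eq

theorem omk_surj {n : ℕ} (w : Equiv.Perm (Fin n)) : Function.Surjective (omk w) := Quotient.mk_surjective

theorem osz_pos {n : ℕ} (w : Equiv.Perm (Fin n)) (o : Orb w) : 0 < osz w o := by
  obtain ⟨x, rfl⟩ := omk_surj w o
  unfold osz; rw [Finset.card_pos]; exact ⟨x, by simp⟩

theorem omk_apply {n : ℕ} (w : Equiv.Perm (Fin n)) (x : Fin n) : omk w (w x) = omk w x := by
  rw [omk_eq]; exact Equiv.Perm.sameCycle_apply_left.2 (Equiv.Perm.SameCycle.refl _ _)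

theorem det_orb {n : ℕ} (w : Equiv.Perm (Fin n)) {R : Type} [CommRing R] (u : Fin n → R) :
    (Matrix.of fun i j : Fin n => (if i = j then (1:R) else 0) - (if w j = i then u j else 0)).det
      = ∏ o : Orb w, (1 - ∏ j ∈ Finset.univ.filter (fun x => omk w x = o), u j) := by
  let _ : LinearOrder (Orb w) := LinearOrder.lift' Quotient.out Quotient.out_injective
  have hbt : Matrix.BlockTriangular (Matrix.of fun i j : Fin n => (if i = j then (1:R) else 0) - (if w j = i then u j else 0)) (omk w) := by
    intro i j hij
    have h1 : i ≠ j := by rintro rfl; exact lt_irrefl _ hij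
    have h2 : w j ≠ i := by rintro rfl; rw [omk_apply] at hij; exact lt_irrefl _ hij
    simp [h1, h2]
  rw [hbt.det_fintype]
  refine Finset.prod_congr rfl fun o _ => ?_
  have hne : Nonempty {x // omk w x = o} := by
    obtain ⟨x, hx⟩ := omk_surj w o
    exact ⟨⟨x, hx⟩⟩
  have hinv : ∀ x, omk w (w x) = o ↔ omk w x = o := by intro x; rw [omk_apply]
  have := det_cycle (S := {x // omk w x = o}) (w.subtypePerm hinv) (by
    rintro ⟨x, hx⟩ ⟨y, hy⟩
    have : w.SameCycle x y := by rw [← omk_eq, hx, hy]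
    exact Equiv.Perm.sameCycle_subtypePerm.2 this) (fun j => u j)
  rw [Finset.prod_subtype (p := fun x => omk w x = o) _ (by simp) u]
  rw [← this]
  congr 1
  ext i j
  simp [Matrix.toSquareBlock_def, Subtype.ext_iff]

theorem pw_orb {n N : ℕ} {R : Type} [CommRing R] (w : Equiv.Perm (Fin n)) (x : Fin N → R) :
    pw w x = ∏ o : Orb w, ∑ i, x i ^ osz w o := by
  rw [Finset.prod_univ_sum, Fintype.piFinset_univ]
  unfold pw
  rw [← Finset.sum_filter]
  symm
  apply Finset.sum_bij (fun (h : Orb w → Fin N) _ => h ∘ omk w)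
  · intro h _
    simp only [Finset.mem_filter, Finset.mem_univ, true_and]
    funext y; simp [omk_apply]
  · intro a _ b _ h
    exact (omk_surj w).injective_comp_right h
  · intro g hg
    have hg : g ∘ w = g := by simpa using hg
    have hm : w ∈ youngSubgroup n (fun y => (g y : ℕ)) := by
      intro i
      have := congrFun hg i
      simp at this
      simp [this]
    refine ⟨Quotient.lift g ?_, Finset.mem_univ _, ?_⟩
    · rintro a b ⟨i, hi⟩
      have := (youngSubgroup n (fun y => (g y : ℕ))).zpow_mem hm i a
      rw [hi] at this
      exact (Fin.ext this).symm
    · funext y; rfl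
  · intro h _
    rw [← Finset.prod_fiberwise_of_maps_to (s := Finset.univ) (t := Finset.univ) (g := omk w) (by simp)]
    refine Finset.prod_congr rfl fun o _ => ?_
    unfold osz
    rw [← Finset.prod_const]
    refine Finset.prod_congr rfl fun y hy => ?_
    have := (Finset.mem_filter.1 hy).2
    simp [this]

def sg {R : Type} [CommRing R] (b : Bool) : R := if b then -1 else 1

theorem one_sub_BMat (n : ℕ) (p : BElt n) (c : K) :
    (1 : Matrix (Fin n) (Fin n) K) - c • BMat n p =
      Matrix.of fun i j : Fin n => (if i = j then (1:K) else 0) - (if p.1 j = i then c * sg (p.2 j) else 0) := by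
  ext i j
  simp [BMat, Matrix.one_apply, sg]

theorem sum_det (n : ℕ) (w : Equiv.Perm (Fin n)) :
    ∑ ε : Fin n → Bool, ((1 : Matrix (Fin n) (Fin n) K) - BMat n (w, ε)).det = 2 ^ n := by
  let g : Fin n → Bool → (Fin n → K) := fun j b i => (if i = j then (1:K) else 0) - (if w j = i then sg b else 0)
  have h := (Matrix.detRowAlternating (n := Fin n) (R := K)).toMultilinearMap.map_sum g
  have h1 : ∀ ε : Fin n → Bool, ((1 : Matrix (Fin n) (Fin n) K) - BMat n (w, ε)).det
      = (Matrix.detRowAlternating (n := Fin n) (R := K)).toMultilinearMap (fun i => g i (ε i)) := by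
    intro ε
    have := one_sub_BMat n (w, ε) 1
    rw [one_smul] at this
    rw [this, ← Matrix.det_transpose]
    have e : (Matrix.of fun i j : Fin n => (if i = j then (1:K) else 0) - (if w j = i then 1 * sg (ε j) else 0)).transpose
        = (fun i => g i (ε i)) := by
      ext i j; simp [g]
    rw [e]; rfl
  rw [Finset.sum_congr rfl (fun ε _ => h1 ε), ← h]
  have e2 : (fun i => ∑ b, g i b) = ((2:K) • (1 : Matrix (Fin n) (Fin n) K)) := by
    ext i j
    simp [g, sg, Matrix.one_apply, eq_comm]
  rw [e2]
  change Matrix.det ((2:K) • (1 : Matrix (Fin n) (Fin n) K)) = _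
  simp

theorem sg_prod {R : Type} [CommRing R] {S : Type} (s : Finset S) (ε : S → Bool) :
    (∏ j ∈ s, (sg (ε j) : R)) = 1 ∨ (∏ j ∈ s, (sg (ε j) : R)) = -1 := by
  induction s using Finset.induction_on with
  | empty => simp
  | insert a s ha ih =>
    rw [Finset.prod_insert ha]
    unfold sg at ih ⊢
    rcases ih with h | h <;> rw [h] <;> by_cases c : ε a <;> simp [c]

theorem X_pow_ne (k : ℕ) (hk : 0 < k) (c : ℚ) : (RatFunc.X : K) ^ k ≠ RatFunc.C c := by
  intro h
  rw [← RatFunc.algebraMap_X, ← RatFunc.algebraMap_C, ← map_pow] at h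
  have := RatFunc.algebraMap_injective ℚ h
  have := congrArg Polynomial.natDegree this
  simp at this
  omega

theorem sum_sign (n : ℕ) (w : Equiv.Perm (Fin n)) :
    ∑ ε : Fin n → Bool, ((1 : Matrix (Fin n) (Fin n) K) - BMat n (w, ε)).det /
        ((1 : Matrix (Fin n) (Fin n) K) - (RatFunc.X : K) • BMat n (w, ε)).det
      = 2 ^ n * ∏ o : Orb w, (1 + (RatFunc.X : K) ^ osz w o)⁻¹ := by
  rw [← sum_det n w, Finset.sum_mul]
  refine Finset.sum_congr rfl fun ε _ => ?_
  have h1 := one_sub_BMat n (w, ε) 1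
  rw [one_smul] at h1
  rw [h1, one_sub_BMat, det_orb, det_orb, ← Finset.prod_div_distrib, ← Finset.prod_mul_distrib]
  refine Finset.prod_congr rfl fun o _ => ?_
  simp only [one_mul, Finset.prod_mul_distrib, Finset.prod_const]
  rw [← osz]
  rcases sg_prod (R := K) (Finset.univ.filter (fun x => omk w x = o)) ε with h | h
  · rw [h]; simp
  · rw [h]; rw [div_eq_mul_inv]; congr 2; ring

theorem colLen_zero_le (μ : YoungDiagram) : μ.colLen 0 ≤ μ.card := by
  rw [YoungDiagram.colLen_eq_card]
  exact Finset.card_le_card (Finset.filter_subset _ _)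

theorem prod_cells {M : Type} [CommMonoid M] (μ : YoungDiagram) (N : ℕ) (hN : μ.card ≤ N) (f : ℕ × ℕ → M) :
    ∏ c ∈ μ.cells, f c = ∏ i ∈ Finset.range N, ∏ j ∈ Finset.range (μ.rowLen i), f (i, j) := by
  rw [← Finset.prod_fiberwise_of_maps_to (s := μ.cells) (t := Finset.range N) (g := Prod.fst)]
  · refine Finset.prod_congr rfl fun i _ => ?_
    have : μ.cells.filter (fun c => c.1 = i) = {i} ×ˢ Finset.range (μ.rowLen i) := by
      rw [← YoungDiagram.row_eq_prod]
      ext c; simp [YoungDiagram.mem_row_iff]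
    calc _ = ∏ c ∈ {i} ×ˢ Finset.range (μ.rowLen i), f c := by
            refine Finset.prod_congr ?_ fun _ _ => rfl
            rw [← this]
      _ = _ := by rw [Finset.prod_product, Finset.prod_singleton]
  · rintro ⟨i, j⟩ h
    rw [YoungDiagram.mem_cells, YoungDiagram.mem_iff_lt_colLen] at h
    have h1 := μ.colLen_anti 0 j (Nat.zero_le _)
    have h2 := colLen_zero_le μ
    simp only [Finset.mem_range]
    omega

theorem sum_rowLen (μ : YoungDiagram) (N : ℕ) (hN : μ.card ≤ N) :
    ∑ i : Fin N, μ.rowLen i = μ.card := by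
  have h := prod_cells μ N hN (fun _ => Multiplicative.ofAdd 1)
  simp only [Finset.prod_const, Finset.card_range, ← ofAdd_nsmul, ← ofAdd_sum] at h
  have h := Multiplicative.ofAdd.injective h
  rw [Finset.sum_range] at h
  simp at h
  exact h.symm

theorem nInv_eq (μ : YoungDiagram) (N : ℕ) (hN : μ.card ≤ N) :
    nInv μ = ∑ i ∈ Finset.range N, i * μ.rowLen i := by
  have h := prod_cells μ N hN (fun c => Multiplicative.ofAdd c.1)
  simp only [Finset.prod_const, Finset.card_range, ← ofAdd_nsmul, ← ofAdd_sum] at h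
  have h := Multiplicative.ofAdd.injective h
  unfold nInv
  rw [h]
  refine Finset.sum_congr rfl fun i _ => ?_
  rw [smul_eq_mul, mul_comm]

theorem row_hook {M : Type} [CommMonoid M] (μ : YoungDiagram) (N : ℕ) (hN : μ.card ≤ N) (i : ℕ)
    (hi : i < N) (F : ℕ → M) :
    (∏ j ∈ Finset.Ioo i N, F ((μ.rowLen i + (N - 1 - i)) - (μ.rowLen j + (N - 1 - j)))) *
      ∏ c ∈ Finset.range (μ.rowLen i), F (hookLen μ (i, c))
    = ∏ m ∈ Finset.range (μ.rowLen i + (N - 1 - i)), F (m + 1) := by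
  have hcN : ∀ c, μ.colLen c ≤ N := fun c =>
    (μ.colLen_anti 0 c (Nat.zero_le _)).trans ((colLen_zero_le μ).trans hN)
  have hrc : ∀ a c, c < μ.rowLen a ↔ a < μ.colLen c := fun a c => by
    rw [← YoungDiagram.mem_iff_lt_rowLen, YoungDiagram.mem_iff_lt_colLen]
  let g : ℕ ⊕ ℕ → ℕ := Sum.elim (fun j => (μ.rowLen i + (N - 1 - i)) - (μ.rowLen j + (N - 1 - j)) - 1)
    (fun c => hookLen μ (i, c) - 1)
  have hinj : Set.InjOn g ((Finset.Ioo i N).disjSum (Finset.range (μ.rowLen i)) : Finset (ℕ ⊕ ℕ)) := by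
    have key : ∀ j ∈ Finset.Ioo i N, ∀ c ∈ Finset.range (μ.rowLen i), g (Sum.inl j) ≠ g (Sum.inr c) := by
      intro j hj c hc
      simp only [Finset.mem_Ioo, Finset.mem_range] at hj hc
      have h1 := hrc j c
      have h2 := (hrc i c).1 hc
      have h3 := hcN c
      have h4 := μ.rowLen_anti i j hj.1.le
      simp only [g, Sum.elim_inl, Sum.elim_inr, hookLen]
      by_cases h : c < μ.rowLen j
      · have := h1.1 h; omega
      · have : ¬ j < μ.colLen c := fun h' => h (h1.2 h')
        omega
    rintro (a | a) ha (b | b) hb hab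
    · simp only [Finset.mem_coe, Finset.inl_mem_disjSum, Finset.mem_Ioo] at ha hb
      simp only [g, Sum.elim_inl] at hab
      have ha' := μ.rowLen_anti i a ha.1.le
      have hb' := μ.rowLen_anti i b hb.1.le
      rcases lt_trichotomy a b with h | h | h
      · have := μ.rowLen_anti a b h.le; omega
      · rw [h]
      · have := μ.rowLen_anti b a h.le; omega
    · simp only [Finset.mem_coe, Finset.inl_mem_disjSum, Finset.inr_mem_disjSum] at ha hb
      exact absurd hab (key a ha b hb)
    · simp only [Finset.mem_coe, Finset.inl_mem_disjSum, Finset.inr_mem_disjSum] at ha hb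
      exact absurd hab.symm (key b hb a ha)
    · simp only [Finset.mem_coe, Finset.inr_mem_disjSum, Finset.mem_range] at ha hb
      simp only [g, Sum.elim_inr, hookLen] at hab
      have ha' := (hrc i a).1 ha
      have hb' := (hrc i b).1 hb
      rcases lt_trichotomy a b with h | h | h
      · have := μ.colLen_anti a b h.le; omega
      · rw [h]
      · have := μ.colLen_anti b a h.le; omega
  have himg : ((Finset.Ioo i N).disjSum (Finset.range (μ.rowLen i))).image g
      = Finset.range (μ.rowLen i + (N - 1 - i)) := by
    apply Finset.eq_of_subset_of_card_le
    · intro y hy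
      obtain ⟨x, hx, rfl⟩ := Finset.mem_image.1 hy
      rcases x with a | a
      · simp only [Finset.inl_mem_disjSum, Finset.mem_Ioo] at hx
        simp only [g, Sum.elim_inl, Finset.mem_range]
        omega
      · simp only [Finset.inr_mem_disjSum, Finset.mem_range] at hx
        have h2 := (hrc i a).1 hx
        have h3 := hcN a
        simp only [g, Sum.elim_inr, Finset.mem_range, hookLen]
        omega
    · rw [Finset.card_image_of_injOn hinj, Finset.card_disjSum]
      simp
      omega
  rw [← himg, Finset.prod_image hinj, Finset.prod_disjSum]
  congr 1
  · refine Finset.prod_congr rfl fun j hj => ?_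
    simp only [Finset.mem_Ioo] at hj
    have h4 := μ.rowLen_anti i j hj.1.le
    simp only [g, Sum.elim_inl]
    congr 1; omega
  · refine Finset.prod_congr rfl fun c hc => ?_
    simp only [Finset.mem_range] at hc
    have h2 := (hrc i c).1 hc
    simp only [g, Sum.elim_inr, hookLen]
    congr 1; omega

theorem row_cont {M : Type} [CommMonoid M] (N : ℕ) (i : ℕ) (r : ℕ)
    (hi : i < N) (F : ℕ → M) :
    (∏ j ∈ Finset.Ioo i N, F (j - i)) * ∏ c ∈ Finset.range r, F (N + c - i)
    = ∏ m ∈ Finset.range (r + (N - 1 - i)), F (m + 1) := by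
  rw [add_comm r, Finset.prod_range_add]
  have : Finset.Ioo i N = Finset.Ico (i+1) N := by ext; simp [Nat.succ_le_iff]
  rw [this, Finset.prod_Ico_eq_prod_range]
  congr 1
  · have : N - (i+1) = N - 1 - i := by omega
    rw [this]
    refine Finset.prod_congr rfl fun j hj => ?_
    congr 1; omega
  · refine Finset.prod_congr rfl fun j hj => ?_
    congr 1; omega

theorem prod_Ioi {M : Type} [CommMonoid M] (N : ℕ) (i : Fin N) (f : ℕ → M) :
    ∏ j ∈ Finset.Ioi i, f (j : ℕ) = ∏ j ∈ Finset.Ioo (i : ℕ) N, f j := by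
  rw [← Fin.map_valEmbedding_Ioi, Finset.prod_map]; rfl

theorem altM_det {N : ℕ} {R : Type} [CommRing R] (t : R) (l : ℕ → ℕ)
    (hl : ∀ i j, i < j → j < N → l j + (N - 1 - j) ≤ l i + (N - 1 - i)) :
    (altM (fun k : Fin N => t ^ (k : ℕ)) (fun i => l i)).det =
      ∏ i ∈ Finset.range N, ∏ j ∈ Finset.Ioo i N,
        (t ^ (l j) * t ^ (N - 1 - j) * (1 - t ^ ((l i + (N - 1 - i)) - (l j + (N - 1 - j))))) := by
  have : altM (fun k : Fin N => t ^ (k : ℕ)) (fun i => l i)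
      = Matrix.vandermonde (fun i : Fin N => t ^ (l i + (N - 1 - i))) := by
    ext i k
    simp only [altM, Matrix.of_apply, Matrix.vandermonde_apply, ← pow_mul]
    rw [mul_comm]
  rw [this, Matrix.det_vandermonde, Finset.prod_range]
  refine Finset.prod_congr rfl fun i _ => ?_
  rw [← prod_Ioi]
  refine Finset.prod_congr rfl fun j hj => ?_
  have hij : (i : ℕ) < j := by simpa using hj
  have := hl i j hij j.2
  rw [← pow_add, mul_sub, mul_one, ← pow_add]
  congr 2; omega

theorem hook_formula {N : ℕ} {R : Type} [CommRing R] (t : R) (μ : YoungDiagram) (hN : μ.card ≤ N) :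
    (altM (fun k : Fin N => t ^ (k : ℕ)) (fun i => μ.rowLen i)).det *
        ∏ c ∈ μ.cells, (1 - t ^ hookLen μ c)
      = (altM (fun k : Fin N => t ^ (k : ℕ)) (fun _ => 0)).det * t ^ nInv μ *
        ∏ c ∈ μ.cells, (1 - t ^ (N + c.2 - c.1)) := by
  have h0 := altM_det (N := N) t (fun _ => 0) (by intros; omega)
  have h1 := altM_det (N := N) t (fun i => μ.rowLen i) (by
    intro i j hij _
    have := μ.rowLen_anti i j hij.le
    omega)
  rw [h0, h1, prod_cells μ N hN, prod_cells μ N hN, nInv_eq μ N hN]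
  have hs : t ^ (∑ i ∈ Finset.range N, i * μ.rowLen i) =
      ∏ i ∈ Finset.range N, ∏ j ∈ Finset.Ioo i N, t ^ μ.rowLen j := by
    rw [Finset.prod_comm' (t' := Finset.range N) (s' := fun j => Finset.range j)]
    · rw [← Finset.prod_pow_eq_pow_sum]
      refine Finset.prod_congr rfl fun i _ => ?_
      rw [Finset.prod_const, Finset.card_range, ← pow_mul, mul_comm]
    · intro x y; simp only [Finset.mem_range, Finset.mem_Ioo]; omega
  rw [hs]
  simp only [← Finset.prod_mul_distrib]
  refine Finset.prod_congr rfl fun i hi => ?_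
  have hi : i < N := by simpa using hi
  have e1 := row_hook μ N hN i hi (fun m => 1 - t ^ m)
  have e2 := row_cont N i (μ.rowLen i) hi (fun m => 1 - t ^ m)
  have e3 : ∀ j ∈ Finset.Ioo i N, (1 - t ^ ((0 + (N - 1 - i)) - (0 + (N - 1 - j)))) = 1 - t ^ (j - i) := by
    intro j hj
    simp only [Finset.mem_Ioo] at hj
    congr 2; omega
  simp only [Finset.prod_mul_distrib]
  rw [Finset.prod_congr rfl e3, mul_assoc, e1, ← e2]
  simp
  ring

theorem tpow_ne (k : ℕ) (hk : 0 < k) : (1 : K) - ((RatFunc.X : K) ^ 2) ^ k ≠ 0 := by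
  intro h
  have h2 := X_pow_ne (2 * k) (by omega) 1
  apply h2
  rw [pow_mul, map_one]
  exact (sub_eq_zero.1 h).symm

theorem tne : (RatFunc.X : K) ^ 2 ≠ 0 := pow_ne_zero _ RatFunc.X_ne_zero

theorem hook_pos (μ : YoungDiagram) (c : ℕ × ℕ) (hc : c ∈ μ.cells) : 0 < hookLen μ c := by
  obtain ⟨i, j⟩ := c
  rw [YoungDiagram.mem_cells] at hc
  have h1 := YoungDiagram.mem_iff_lt_colLen.1 hc
  have h2 := YoungDiagram.mem_iff_lt_rowLen.1 hc
  simp only [hookLen]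
  omega

theorem alt0_ne (N : ℕ) : (altM (fun k : Fin N => ((RatFunc.X : K) ^ 2) ^ (k : ℕ)) (fun _ => 0)).det ≠ 0 := by
  have h0 := altM_det (N := N) ((RatFunc.X : K) ^ 2) (fun _ => 0) (by intros; omega)
  rw [h0]
  refine Finset.prod_ne_zero_iff.2 fun i hi => Finset.prod_ne_zero_iff.2 fun j hj => ?_
  simp only [Finset.mem_Ioo] at hj
  refine mul_ne_zero (mul_ne_zero (pow_ne_zero _ tne) (pow_ne_zero _ tne)) (tpow_ne _ ?_)
  omega

theorem at_point (n : ℕ) (μ : YoungDiagram) (hcard : μ.card = n)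
    (χ : Equiv.Perm (Fin n) → ℤ)
    (hχ : IsIrrCharOf n (↑μ.rowLens : Multiset ℕ) (↑μ.transpose.rowLens : Multiset ℕ) χ)
    (N : ℕ) (hN : n ≤ N) (t : K) (ht : t = RatFunc.X ^ 2) :
    ∑ w : Equiv.Perm (Fin n), ((χ w : ℤ) : K) * ∏ o : Orb w, ((1 - (t ^ N) ^ osz w o) * (1 - t ^ osz w o)⁻¹)
      = (n.factorial : K) * t ^ nInv μ *
        ∏ c ∈ μ.cells, ((1 - t ^ N * t ^ content c) * (1 - t ^ hookLen μ c)⁻¹) := by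
  have hcN : μ.card ≤ N := hcard ▸ hN
  have hl : ∑ i : Fin N, μ.rowLen i = n := (sum_rowLen μ N hcN).trans hcard
  have hne := fun k hk => ht ▸ tpow_ne k hk
  have ht0 : t ≠ 0 := ht ▸ tne
  have hf := frob (fun k : Fin N => t ^ (k : ℕ)) (fun i : Fin N => μ.rowLen i) hl
  have hh := hook_formula t μ hcN
  have h0 := alt0_ne N
  rw [← ht] at h0
  have hP : ∏ c ∈ μ.cells, (1 - t ^ hookLen μ c) ≠ 0 :=
    Finset.prod_ne_zero_iff.2 fun c hc => hne _ (hook_pos μ c hc)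
  have hA : ∑ w : Equiv.Perm (Fin n), ((χ w : ℤ) : K) * ∏ o : Orb w, ((1 - (t ^ N) ^ osz w o) * (1 - t ^ osz w o)⁻¹)
      = ∑ w : Equiv.Perm (Fin n), ((chiL (fun i : Fin N => μ.rowLen i) w : ℤ) : K) * pw w (fun k : Fin N => t ^ (k : ℕ)) := by
    refine Finset.sum_congr rfl fun w _ => ?_
    rw [chi_eq n μ hcard χ hχ N hN hl w, pw_orb]
    congr 1
    refine Finset.prod_congr rfl fun o _ => ?_
    have h1 := hne _ (osz_pos w o)
    rw [mul_inv_eq_iff_eq_mul₀ h1]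
    have h2 := geom_sum_mul_neg (t ^ osz w o) N
    rw [← pow_mul, mul_comm N, pow_mul, ← h2, Finset.sum_range]
    congr 1
    refine Finset.sum_congr rfl fun i _ => ?_
    rw [← pow_mul, ← pow_mul, mul_comm]
  rw [hA, Finset.prod_mul_distrib, Finset.prod_inv_distrib]
  have hB : ∏ c ∈ μ.cells, (1 - t ^ N * t ^ content c) = ∏ c ∈ μ.cells, (1 - t ^ (N + c.2 - c.1)) := by
    refine Finset.prod_congr rfl fun c hc => ?_
    obtain ⟨i, j⟩ := c
    rw [YoungDiagram.mem_cells, YoungDiagram.mem_iff_lt_colLen] at hc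
    have h1 := μ.colLen_anti 0 j (Nat.zero_le _)
    have h2 := colLen_zero_le μ
    rw [← zpow_natCast, ← zpow_natCast, ← zpow_add₀ ht0]
    congr 2
    simp only [content]
    omega
  rw [hB, ← mul_assoc, eq_mul_inv_iff_mul_eq₀ hP]
  apply mul_right_cancel₀ h0
  linear_combination (∏ c ∈ μ.cells, (1 - t ^ hookLen μ c)) * hf + (n.factorial : K) * hh

theorem at_any (n : ℕ) (μ : YoungDiagram) (hcard : μ.card = n)
    (χ : Equiv.Perm (Fin n) → ℤ)
    (hχ : IsIrrCharOf n (↑μ.rowLens : Multiset ℕ) (↑μ.transpose.rowLens : Multiset ℕ) χ)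
    (t : K) (ht : t = RatFunc.X ^ 2) (a : K) :
    ∑ w : Equiv.Perm (Fin n), ((χ w : ℤ) : K) * ∏ o : Orb w, ((1 - a ^ osz w o) * (1 - t ^ osz w o)⁻¹)
      = (n.factorial : K) * t ^ nInv μ *
        ∏ c ∈ μ.cells, ((1 - a * t ^ content c) * (1 - t ^ hookLen μ c)⁻¹) := by
  let P : Polynomial K := ∑ w : Equiv.Perm (Fin n), Polynomial.C ((χ w : ℤ) : K) *
    ∏ o : Orb w, ((1 - Polynomial.X ^ osz w o) * Polynomial.C (1 - t ^ osz w o)⁻¹)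
  let Q : Polynomial K := Polynomial.C ((n.factorial : K) * t ^ nInv μ) *
        ∏ c ∈ μ.cells, ((1 - Polynomial.X * Polynomial.C (t ^ content c)) * Polynomial.C (1 - t ^ hookLen μ c)⁻¹)
  have eP : ∀ b : K, P.eval b = ∑ w : Equiv.Perm (Fin n), ((χ w : ℤ) : K) * ∏ o : Orb w, ((1 - b ^ osz w o) * (1 - t ^ osz w o)⁻¹) := by
    intro b
    simp only [P, Polynomial.eval_finset_sum, Polynomial.eval_mul, Polynomial.eval_C, Polynomial.eval_prod,
      Polynomial.eval_sub, Polynomial.eval_one, Polynomial.eval_pow, Polynomial.eval_X]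
  have eQ : ∀ b : K, Q.eval b = (n.factorial : K) * t ^ nInv μ *
        ∏ c ∈ μ.cells, ((1 - b * t ^ content c) * (1 - t ^ hookLen μ c)⁻¹) := by
    intro b
    simp only [Q, Polynomial.eval_mul, Polynomial.eval_C, Polynomial.eval_prod,
      Polynomial.eval_sub, Polynomial.eval_one, Polynomial.eval_X]
  have hPQ : P = Q := by
    apply Polynomial.eq_of_infinite_eval_eq
    have hinj : Function.Injective (fun m : ℕ => t ^ (n + m)) := by
      have key : ∀ a b : ℕ, a < b → t ^ (n + a) ≠ t ^ (n + b) := by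
        intro a b hab h
        have h3 : n + b = (n + a) + (b - a) := by omega
        rw [h3, pow_add _ (n + a)] at h
        have h4 : t ^ (n + a) ≠ 0 := pow_ne_zero _ (ht ▸ tne)
        have h5 : t ^ (b - a) = 1 := (mul_right_eq_self₀.1 h.symm).resolve_right h4
        apply tpow_ne (b - a) (by omega)
        rw [← ht, h5, sub_self]
      intro a b h
      rcases lt_trichotomy a b with h' | h' | h'
      · exact absurd h (key _ _ h')
      · exact h'
      · exact absurd h.symm (key _ _ h')
    refine (Set.infinite_range_of_injective hinj).mono ?_
    rintro _ ⟨m, rfl⟩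
    change P.eval _ = Q.eval _
    rw [eP, eQ]
    exact at_point n μ hcard χ hχ (n + m) (by omega) t ht
  rw [← eP, ← eQ, hPQ]

/-- Here `μ` is the Young diagram of the partition `λ ⊢ n`, `χ` is the
character of the irreducible `S_n`-representation `σ_λ`, and `[λ×∅]` is its pullback
through `W(B_n) → S_n`; `q = X ∈ ℚ(q)`. -/
theorem statement9 (n : ℕ) (μ : YoungDiagram) (hcard : μ.card = n)
    (χ : Equiv.Perm (Fin n) → ℤ)
    (hχ : IsIrrCharOf n (↑μ.rowLens : Multiset ℕ) (↑μ.transpose.rowLens : Multiset ℕ) χ) :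
    ((RatFunc.X : K) - 1) ^ n * ((Fintype.card (BElt n) : K))⁻¹ *
        ∑ p : BElt n, ((χ p.1 : ℤ) : K) *
          Matrix.det ((1 : Matrix (Fin n) (Fin n) K) - BMat n p) /
          Matrix.det ((1 : Matrix (Fin n) (Fin n) K) - (RatFunc.X : K) • BMat n p)
      = ((RatFunc.X : K) - 1) ^ n * (RatFunc.X : K) ^ (2 * nInv μ) *
          ∏ c ∈ μ.cells,
            (1 - (RatFunc.X : K) ^ (2 * content c + 1)) /
              (1 - (RatFunc.X : K) ^ (2 * hookLen μ c)) := by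
  have hq0 : (RatFunc.X : K) ≠ 0 := RatFunc.X_ne_zero
  rw [Fintype.sum_prod_type]
  have h1 : ∀ w : Equiv.Perm (Fin n), ∑ ε : Fin n → Bool, ((χ w : ℤ) : K) *
          Matrix.det ((1 : Matrix (Fin n) (Fin n) K) - BMat n (w, ε)) /
          Matrix.det ((1 : Matrix (Fin n) (Fin n) K) - (RatFunc.X : K) • BMat n (w, ε))
      = 2 ^ n * (((χ w : ℤ) : K) * ∏ o : Orb w, ((1 - (RatFunc.X : K) ^ osz w o) *
          (1 - ((RatFunc.X : K) ^ 2) ^ osz w o)⁻¹)) := by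
    intro w
    simp only [mul_div_assoc]
    rw [← Finset.mul_sum, sum_sign]
    rw [mul_left_comm]
    congr 2
    refine Finset.prod_congr rfl fun o _ => ?_
    have hk := tpow_ne _ (osz_pos w o)
    have hfac : (1 : K) - ((RatFunc.X : K) ^ 2) ^ osz w o
        = (1 - (RatFunc.X : K) ^ osz w o) * (1 + (RatFunc.X : K) ^ osz w o) := by
      rw [← pow_mul, mul_comm 2, pow_mul]; ring
    rw [hfac] at hk ⊢
    have ha := left_ne_zero_of_mul hk
    rw [mul_inv, ← mul_assoc, mul_inv_cancel₀ ha, one_mul]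
  have h2 : ∑ w : Equiv.Perm (Fin n), ∑ ε : Fin n → Bool, ((χ w : ℤ) : K) *
          Matrix.det ((1 : Matrix (Fin n) (Fin n) K) - BMat n (w, ε)) /
          Matrix.det ((1 : Matrix (Fin n) (Fin n) K) - (RatFunc.X : K) • BMat n (w, ε))
      = 2 ^ n * ((n.factorial : K) * ((RatFunc.X : K) ^ 2) ^ nInv μ *
        ∏ c ∈ μ.cells, ((1 - (RatFunc.X : K) * ((RatFunc.X : K) ^ 2) ^ content c) *
          (1 - ((RatFunc.X : K) ^ 2) ^ hookLen μ c)⁻¹)) := by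
    rw [Finset.sum_congr rfl (fun w _ => h1 w), ← Finset.mul_sum,
      at_any n μ hcard χ hχ _ rfl]
  have hc : (Fintype.card (BElt n) : K) = 2 ^ n * (n.factorial : K) := by
    rw [Fintype.card_prod, Fintype.card_perm]
    simp [mul_comm]
  have hfne : (n.factorial : K) ≠ 0 := by exact_mod_cast n.factorial_ne_zero
  have h2ne : (2 : K) ^ n ≠ 0 := pow_ne_zero _ two_ne_zero
  have h3 : ∏ c ∈ μ.cells, ((1 - (RatFunc.X : K) * ((RatFunc.X : K) ^ 2) ^ content c) *
          (1 - ((RatFunc.X : K) ^ 2) ^ hookLen μ c)⁻¹)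
      = ∏ c ∈ μ.cells,
            (1 - (RatFunc.X : K) ^ (2 * content c + 1)) /
              (1 - (RatFunc.X : K) ^ (2 * hookLen μ c)) := by
    refine Finset.prod_congr rfl fun c _ => ?_
    rw [div_eq_mul_inv, pow_mul, zpow_add_one₀ hq0, zpow_mul, mul_comm (RatFunc.X : K)]
    rfl
  rw [hc]
  rw [h3] at h2
  refine (congrArg _ h2).trans ?_
  rw [pow_mul]
  field_simp
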